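/- Let Ω and Ω' be open bounded convex sets in ℝⁿ with their Hilbert metrics and let τ: Ω → Ω' be an isometry. Then τ is (the restriction of) a projective transformation if and only if τ has a focusing point. -/

import Mathlib

/-!
The proof works in the cone `C = {t • (x, 1) | t > 0, x ∈ Ω}` over `Ω`, where projective maps are
linear. For `v ∈ C` and a nonzero `f ∈ closure C`, the exit parameter `exitT C v f` is the largest
`t` with `v - t • f ∈ closure C`, and `D u v = exitT C u v * exitT C v u` equals `exp (-d)` for the
Hilbert distance `d` (`hilbertDist_eq`).

*A focusing point gives a projective map.* A geodesic segment on a chord ending in an extreme ray is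
the unique geodesic between its end points, so an isometry maps such chords to chords, preserving
cross ratios (`IsIso.line`). If `e` is a focusing point, all chords ending in `e` are mapped to
chords ending in one boundary point `e'`. Rescaling the isometry so that it preserves the exit
parameter towards `e` produces a homogeneous lift `F : C → C'` (`flift`) with
`F (v + k • e) = F v + k • e'`. Along a chord `w + s • f` towards another extreme ray `f` one has
`F (w + s • f) = μ s • (w' + s • f')`, and the point is that `μ` is constant:

* if the segment from `e` to `f` lies in the boundary (`affine_of_boundary`), this follows by
  comparing `D` between `w + s • f` and `w + r • f + k • e` with its image as `k → ∞`, once it is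
  known that the segment from `e'` to `f'` lies in the boundary as well (`not_interior`);
* if it passes through the interior (`affine_of_interior`), `μ` is asymptotically constant
  (`asymp_factor`), and comparing the chords through `v` and `v + e` shows that it is constant.

Hence `F` is affine along every extreme ray (`affine`). By the Krein–Milman theorem extreme rays
contain a basis (`exists_basis`). The slope of `F` along a basis vector is monotone in the base
point and homogeneous of degree zero, so it is constant and `F` is linear (`exists_linear`).

*A projective map has a focusing point.* The linear map inducing `τ` is nonzero at the lift of every
point of `closure Ω`, so accumulation points of `τ '' r` are projective images of accumulation
points of `r`; thus every extreme point is focusing (`focusing_of_projective`).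
-/

open Set
open scoped LinearAlgebra.Projectivization
open scoped Classical

noncomputable section

abbrev Euc (n : ℕ) := EuclideanSpace ℝ (Fin n)

/-- `α` and `β` are the two points where the straight line through `x` and `y`
meets the boundary of `Ω`, labeled so that `|α−x| < |α−y|` and `|β−y| < |β−x|`. -/
def IsHilbertPair {n : ℕ} (Ω : Set (Euc n)) (x y α β : Euc n) : Prop :=
  α ∈ frontier Ω ∧ β ∈ frontier Ω ∧
    Collinear ℝ ({α, x, y} : Set (Euc n)) ∧ Collinear ℝ ({β, x, y} : Set (Euc n)) ∧
    dist α x < dist α y ∧ dist β y < dist β x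

/-- The Hilbert metric of `Ω`: `d_Ω(x,y) = ln((|α−y|/|α−x|)·(|β−x|/|β−y|))` for `x ≠ y`
(where `α, β` are as in `IsHilbertPair`; for `x ≠ y` in a convex domain `Ω` such a pair
exists and is unique), and `d_Ω(x,x) = 0` (no such pair exists when `x = y`). -/
def hilbertDist {n : ℕ} (Ω : Set (Euc n)) (x y : Euc n) : ℝ :=
  if h : ∃ p : Euc n × Euc n, IsHilbertPair Ω x y p.1 p.2 then
    Real.log ((dist h.choose.1 y / dist h.choose.1 x) * (dist h.choose.2 x / dist h.choose.2 y))
  else 0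

/-- An isometry of Hilbert geometries: a surjective distance preserving map. -/
def IsHilbertIsometry {n : ℕ} (Ω Ω' : Set (Euc n)) (τ : Euc n → Euc n) : Prop :=
  Set.MapsTo τ Ω Ω' ∧ Set.SurjOn τ Ω Ω' ∧
    ∀ x ∈ Ω, ∀ y ∈ Ω, hilbertDist Ω' (τ x) (τ y) = hilbertDist Ω x y

/-- The standard affine chart `ℝⁿ → ℝPⁿ`, `x ↦ [x : 1]`. -/
def chart {n : ℕ} (x : Euc n) : Projectivization ℝ (Fin (n + 1) → ℝ) :=
  Projectivization.mk ℝ ((Fin.snoc (fun i => x i) 1 : Fin (n + 1) → ℝ))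
    (fun h => one_ne_zero (α := ℝ) (by simpa using congrFun h (Fin.last n)))

/-- The projective transformation of `ℝPⁿ` induced by an element of `GL_{n+1}(ℝ)`
(every element of `PGL_{n+1}(ℝ)` arises this way). -/
def projMap {n : ℕ} (g : (Fin (n + 1) → ℝ) ≃ₗ[ℝ] (Fin (n + 1) → ℝ)) :
    Projectivization ℝ (Fin (n + 1) → ℝ) → Projectivization ℝ (Fin (n + 1) → ℝ) :=
  Projectivization.map (g : (Fin (n + 1) → ℝ) →ₗ[ℝ] (Fin (n + 1) → ℝ)) g.injective

/-- `τ` agrees on `Ω` with (the restriction of) a projective transformation of `ℝPⁿ`. -/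
def IsProjectiveOn {n : ℕ} (Ω : Set (Euc n)) (τ : Euc n → Euc n) : Prop :=
  ∃ g : (Fin (n + 1) → ℝ) ≃ₗ[ℝ] (Fin (n + 1) → ℝ),
    ∀ x ∈ Ω, chart (τ x) = projMap g (chart x)

/-- A ray in `Ω`: the intersection with `Ω` of a Euclidean ray starting at a point of `Ω`. -/
def IsRayIn {n : ℕ} (Ω r : Set (Euc n)) : Prop :=
  ∃ p ∈ Ω, ∃ d : Euc n, d ≠ 0 ∧ r = {x | ∃ t : ℝ, 0 ≤ t ∧ x = p + t • d} ∩ Ω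

/-- A line in `Ω`: the nonempty intersection of a straight line with `Ω`. -/
def IsLineIn {n : ℕ} (Ω L : Set (Euc n)) : Prop :=
  L.Nonempty ∧ ∃ p d : Euc n, d ≠ 0 ∧ L = {x | ∃ t : ℝ, x = p + t • d} ∩ Ω

/-- `a` is an accumulation point of the set `s ⊆ Ω` on the boundary of `Ω`.
For a ray `r` in a convex domain `Ω` there is exactly one such point, denoted `a(r)`. -/
def IsBdryLimit {n : ℕ} (Ω s : Set (Euc n)) (a : Euc n) : Prop :=
  a ∈ frontier Ω ∧ a ∈ closure s

/-- `e` is a focusing point of the isometry `τ : Ω → Ω'`: an extreme point of the closure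
of `Ω` such that for any two rays `r₁, r₂` in `Ω` with `a(r₁) = a(r₂) = e` one has
`a(τ(r₁)) = a(τ(r₂))`. -/
def IsFocusingPoint {n : ℕ} (Ω Ω' : Set (Euc n)) (τ : Euc n → Euc n) (e : Euc n) : Prop :=
  e ∈ Set.extremePoints ℝ (closure Ω) ∧
    ∀ r₁ r₂ : Set (Euc n), IsRayIn Ω r₁ → IsRayIn Ω r₂ →
      IsBdryLimit Ω r₁ e → IsBdryLimit Ω r₂ e →
      ∀ a₁ a₂ : Euc n, IsBdryLimit Ω' (τ '' r₁) a₁ → IsBdryLimit Ω' (τ '' r₂) a₂ → a₁ = a₂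

/-- An extreme line in `Ω`: a line in `Ω` whose closure meets `∂Ω` in extreme points
of the closure of `Ω`. -/
def IsExtremeLine {n : ℕ} (Ω L : Set (Euc n)) : Prop :=
  IsLineIn Ω L ∧ ∀ x ∈ closure L ∩ frontier Ω, x ∈ Set.extremePoints ℝ (closure Ω)

/-- `s` is rigid in `Ω`: for any two points `a, b` of `s` the segment `[a,b]` is the
unique geodesic from `a` to `b` in `(Ω, d_Ω)`, i.e. every point `z` with
`d(a,z) + d(z,b) = d(a,b)` lies on the segment `[a,b]`. -/
def IsRigidSet {n : ℕ} (Ω s : Set (Euc n)) : Prop :=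
  ∀ a ∈ s, ∀ b ∈ s, ∀ z ∈ Ω,
    hilbertDist Ω a z + hilbertDist Ω z b = hilbertDist Ω a b → z ∈ segment ℝ a b

/-- A face of a closed convex set `C`: a convex subset `F ⊆ C` such that whenever an open
segment between two points of `C` meets `F`, the whole closed segment lies in `F`. -/
def IsFace {n : ℕ} (C F : Set (Euc n)) : Prop :=
  Convex ℝ F ∧ IsExtreme ℝ C F

/-- A face of `C` which is neither empty nor all of `C`. -/
def IsProperFace {n : ℕ} (C F : Set (Euc n)) : Prop :=
  IsFace C F ∧ F.Nonempty ∧ F ≠ C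

/-- `Ω` is a cone with vertex `v` and base `B`: `B` is an `(n−1)`-dimensional convex
domain lying in a hyperplane not containing `v`, and `Ω` is the union of the open
segments from `v` to the points of `B`. -/
def IsConeWith {n : ℕ} (Ω : Set (Euc n)) (v : Euc n) (B : Set (Euc n)) : Prop :=
  ∃ (f : Euc n →ₗ[ℝ] ℝ) (c : ℝ), f ≠ 0 ∧ (∀ b ∈ B, f b = c) ∧ f v ≠ c ∧
    B.Nonempty ∧ Convex ℝ B ∧ Bornology.IsBounded B ∧
    B = intrinsicInterior ℝ B ∧
    (affineSpan ℝ B : Set (Euc n)) = {x | f x = c} ∧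
    Ω = ⋃ b ∈ B, openSegment ℝ v b

/-- `Ω` is a cone. -/
def IsCone {n : ℕ} (Ω : Set (Euc n)) : Prop :=
  ∃ v B, IsConeWith Ω v B

/-! ### Cones and exit parameters -/

namespace HilbertCone

open Filter Topology

variable {V : Type*} [NormedAddCommGroup V] [NormedSpace ℝ V]

/-- An open convex cone `C` on which the linear form `h` (the height) is positive and dominates
the norm; such cones are the cones over bounded convex domains. -/
structure PCone (C : Set V) (h : V →L[ℝ] ℝ) : Prop where
  isOpen : IsOpen C
  nonempty : C.Nonempty
  add : ∀ {u v}, u ∈ C → v ∈ C → u + v ∈ C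
  smul : ∀ {c : ℝ} {u}, 0 < c → u ∈ C → c • u ∈ C
  pos : ∀ {u}, u ∈ C → 0 < h u
  bound : ∃ B : ℝ, ∀ u ∈ C, ‖u‖ ≤ B * h u

/-- For `v ∈ C` and `f ∈ closure C` nonzero, the parameter `t` at which `v - t • f` leaves the
closed cone. The reciprocal of `exitT C y x` is the quantity `inf {m | m • y - x ∈ closure C}`
whose logarithm is the Funk distance from `x` to `y`. -/
def exitT (C : Set V) (v f : V) : ℝ := sSup {t : ℝ | v - t • f ∈ closure C}

/-- `exp (-d)`, where `d` is the Hilbert distance between the rays through `u` and `v`. -/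
def D (C : Set V) (u v : V) : ℝ := exitT C u v * exitT C v u

namespace PCone

variable {C : Set V} {h : V →L[ℝ] ℝ} (H : PCone C h)
include H

lemma sub_closure {u : V} (hu : u ∈ C) : u ∈ closure C := subset_closure hu

lemma convex : Convex ℝ C := by
  intro x hx y hy a b ha hb hab
  rcases ha.eq_or_lt with rfl | ha
  · have : b = 1 := by linarith
    subst this; simpa using hy
  rcases hb.eq_or_lt with rfl | hb
  · have : a = 1 := by linarith
    subst this; simpa using hx
  exact H.add (H.smul ha hx) (H.smul hb hy)

lemma smul_closure {c : ℝ} (hc : 0 ≤ c) {u : V} (hu : u ∈ closure C) : c • u ∈ closure C := by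
  rcases hc.eq_or_lt with rfl | hc
  · obtain ⟨w, hw⟩ := H.nonempty
    rw [zero_smul]
    have ht : Tendsto (fun a : ℝ => a • w) (𝓝[>] 0) (𝓝 ((0 : ℝ) • w)) :=
      ((continuous_id.smul continuous_const).tendsto (0 : ℝ)).mono_left nhdsWithin_le_nhds
    rw [zero_smul] at ht
    refine mem_closure_of_tendsto ht ?_
    filter_upwards [self_mem_nhdsWithin] with a ha
    exact H.smul ha hw
  · have hm : MapsTo (fun u : V => c • u) C C := fun u hu => H.smul hc hu
    exact hm.closure (continuous_const_smul c) hu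

lemma zero_mem : (0 : V) ∈ closure C := by
  obtain ⟨w, hw⟩ := H.nonempty
  simpa using H.smul_closure le_rfl (H.sub_closure hw)

lemma zero_notMem : (0 : V) ∉ C := fun h0 => by simpa using H.pos h0

lemma add_closure_left {u v : V} (hu : u ∈ C) (hv : v ∈ closure C) : u + v ∈ C := by
  have := H.convex.combo_interior_closure_mem_interior (by rwa [H.isOpen.interior_eq]) hv
    (show (0 : ℝ) < 1 / 2 by norm_num) (show (0 : ℝ) ≤ 1 / 2 by norm_num) (by norm_num)
  rw [H.isOpen.interior_eq] at this
  have h2 := H.smul (show (0 : ℝ) < 2 by norm_num) this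
  rw [smul_add, smul_smul, smul_smul] at h2
  norm_num at h2
  exact h2

lemma add_closure {u v : V} (hu : u ∈ closure C) (hv : v ∈ closure C) : u + v ∈ closure C :=
  map_mem_closure₂ continuous_add hu hv fun _ ha _ hb => H.add ha hb

lemma nonneg {u : V} (hu : u ∈ closure C) : 0 ≤ h u := by
  have : closure C ⊆ {u | 0 ≤ h u} :=
    closure_minimal (fun u hu => (H.pos hu).le) (isClosed_le continuous_const h.continuous)
  exact this hu

lemma exists_bound : ∃ B : ℝ, 0 < B ∧ ∀ u ∈ closure C, ‖u‖ ≤ B * h u := by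
  obtain ⟨B, hB⟩ := H.bound
  refine ⟨max B 1, by positivity, ?_⟩
  have : closure C ⊆ {u | ‖u‖ ≤ max B 1 * h u} :=
    closure_minimal (fun u hu => (hB u hu).trans
      (mul_le_mul_of_nonneg_right (le_max_left _ _) (H.pos hu).le))
      (isClosed_le continuous_norm (continuous_const.mul h.continuous))
  exact fun u hu => this hu

lemma eq_zero {u : V} (hu : u ∈ closure C) (h0 : h u ≤ 0) : u = 0 := by
  obtain ⟨B, hB, hb⟩ := H.exists_bound
  have := hb u hu
  have : ‖u‖ ≤ 0 := by nlinarith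
  simpa using this

lemma pos_of_ne {u : V} (hu : u ∈ closure C) (h0 : u ≠ 0) : 0 < h u := by
  by_contra hc
  exact h0 (H.eq_zero hu (not_lt.1 hc))

lemma ne_zero {u : V} (hu : u ∈ C) : u ≠ 0 := fun h0 => H.zero_notMem (h0 ▸ hu)

lemma smul_mem_iff {c : ℝ} (hc : 0 < c) {u : V} : c • u ∈ C ↔ u ∈ C := by
  refine ⟨fun hu => ?_, H.smul hc⟩
  have := H.smul (inv_pos.2 hc) hu
  rwa [smul_smul, inv_mul_cancel₀ hc.ne', one_smul] at this

lemma smul_notMem {c : ℝ} (hc : 0 ≤ c) {u : V} (hu : u ∉ C) : c • u ∉ C := by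
  rcases hc.eq_or_lt with rfl | hc
  · simpa using H.zero_notMem
  · rwa [H.smul_mem_iff hc]

/-! #### The exit parameter -/

lemma exitT_bddAbove (v : V) {f : V} (hf : f ∈ closure C) (hf0 : f ≠ 0) :
    BddAbove {t : ℝ | v - t • f ∈ closure C} := by
  have hp := H.pos_of_ne hf hf0
  refine ⟨h v / h f, fun t ht => ?_⟩
  have := H.nonneg ht
  rw [map_sub, map_smul, smul_eq_mul] at this
  rw [le_div_iff₀ hp]; linarith

lemma le_exitT {v f : V} (hf : f ∈ closure C) (hf0 : f ≠ 0) {t : ℝ}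
    (ht : v - t • f ∈ closure C) : t ≤ exitT C v f :=
  le_csSup (H.exitT_bddAbove v hf hf0) ht

lemma exitT_mem {v f : V} (hv : v ∈ C) (hf : f ∈ closure C) (hf0 : f ≠ 0) :
    v - exitT C v f • f ∈ closure C := by
  have hcl : IsClosed {t : ℝ | v - t • f ∈ closure C} :=
    isClosed_closure.preimage (by fun_prop)
  exact hcl.csSup_mem ⟨0, by simpa using H.sub_closure hv⟩ (H.exitT_bddAbove v hf hf0)

omit H in
lemma exists_gt (ho : IsOpen C) {v f : V} {t : ℝ} (hv : v - t • f ∈ C) :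
    ∃ s, t < s ∧ v - s • f ∈ C := by
  have hcont : Continuous fun s : ℝ => v - s • f := by fun_prop
  have hev : ∀ᶠ s in 𝓝 t, v - s • f ∈ C := hcont.continuousAt.eventually (ho.mem_nhds hv)
  have hev' : ∀ᶠ s in 𝓝[>] t, v - s • f ∈ C := hev.filter_mono nhdsWithin_le_nhds
  obtain ⟨s, hs1, hs2⟩ := (hev'.and self_mem_nhdsWithin).exists
  exact ⟨s, hs2, hs1⟩

lemma exitT_notMem {v f : V} (hf : f ∈ closure C) (hf0 : f ≠ 0) :
    v - exitT C v f • f ∉ C := fun hc => by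
  obtain ⟨s, hs, hm⟩ := exists_gt H.isOpen hc
  exact absurd (H.le_exitT hf hf0 (H.sub_closure hm)) (not_le.2 hs)

lemma exitT_pos {v f : V} (hv : v ∈ C) (hf : f ∈ closure C) (hf0 : f ≠ 0) :
    0 < exitT C v f := by
  obtain ⟨s, hs, hm⟩ := exists_gt H.isOpen (f := f) (t := 0) (by simpa using hv)
  exact hs.trans_le (H.le_exitT hf hf0 (H.sub_closure hm))

lemma mem_of_lt_exitT {v f : V} (hv : v ∈ C) (hf : f ∈ closure C) (hf0 : f ≠ 0) {t : ℝ}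
    (ht : t < exitT C v f) : v - t • f ∈ C := by
  rcases le_or_gt 0 t with h0 | h0
  · have hT := H.exitT_pos hv hf hf0
    have hlt : t / exitT C v f < 1 := (div_lt_one hT).2 ht
    have := H.add_closure_left (H.smul (sub_pos.2 hlt) hv)
      (H.smul_closure (div_nonneg h0 hT.le) (H.exitT_mem hv hf hf0))
    convert this using 1
    rw [smul_sub, smul_smul, div_mul_cancel₀ _ hT.ne']
    module
  · have := H.add_closure_left hv (H.smul_closure (neg_nonneg.2 h0.le) hf)
    convert this using 1
    module

lemma exitT_eq {v f : V} (hv : v ∈ C) (hf : f ∈ closure C) (hf0 : f ≠ 0) {t : ℝ}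
    (h1 : v - t • f ∈ closure C) (h2 : v - t • f ∉ C) : exitT C v f = t := by
  refine le_antisymm ?_ (H.le_exitT hf hf0 h1)
  by_contra hc
  exact h2 (H.mem_of_lt_exitT hv hf hf0 (not_le.1 hc))

lemma exitT_smul_left {v f : V} (hv : v ∈ C) (hf : f ∈ closure C) (hf0 : f ≠ 0) {a : ℝ}
    (ha : 0 < a) : exitT C (a • v) f = a * exitT C v f := by
  refine H.exitT_eq (H.smul ha hv) hf hf0 ?_ ?_
  · rw [mul_smul, ← smul_sub]; exact H.smul_closure ha.le (H.exitT_mem hv hf hf0)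
  · rw [mul_smul, ← smul_sub]; exact H.smul_notMem ha.le (H.exitT_notMem hf hf0)

lemma exitT_smul_right {v f : V} (hv : v ∈ C) (hf : f ∈ closure C) (hf0 : f ≠ 0) {b : ℝ}
    (hb : 0 < b) : exitT C v (b • f) = exitT C v f / b := by
  have e : (exitT C v f / b) • b • f = exitT C v f • f := by
    rw [smul_smul, div_mul_cancel₀ _ hb.ne']
  refine H.exitT_eq hv (H.smul_closure hb.le hf) (smul_ne_zero hb.ne' hf0) ?_ ?_
  · rw [e]; exact H.exitT_mem hv hf hf0
  · rw [e]; exact H.exitT_notMem hf hf0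

lemma exitT_self {v : V} (hv : v ∈ C) : exitT C v v = 1 :=
  H.exitT_eq hv (H.sub_closure hv) (H.ne_zero hv) (by simpa using H.zero_mem)
    (by simpa using H.zero_notMem)

lemma exitT_mul_le {x y z : V} (hx : x ∈ C) (hy : y ∈ C) (hz : z ∈ C) :
    exitT C x y * exitT C y z ≤ exitT C x z := by
  refine H.le_exitT (H.sub_closure hz) (H.ne_zero hz) ?_
  have h1 := H.exitT_mem hx (H.sub_closure hy) (H.ne_zero hy)
  have h2 := H.exitT_mem hy (H.sub_closure hz) (H.ne_zero hz)
  have h3 := H.add_closure h1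
    (H.smul_closure (H.exitT_pos hx (H.sub_closure hy) (H.ne_zero hy)).le h2)
  convert h3 using 1
  module

/-- Joint continuity of the exit parameter. -/
lemma tendsto_exitT {ι : Type*} {l : Filter ι} {v f : ι → V} {v₀ f₀ : V}
    (hv₀ : v₀ ∈ C) (hf₀ : f₀ ∈ closure C) (hf0 : f₀ ≠ 0)
    (hv : ∀ᶠ i in l, v i ∈ C) (hf : ∀ᶠ i in l, f i ∈ closure C ∧ f i ≠ 0)
    (tv : Tendsto v l (𝓝 v₀)) (tf : Tendsto f l (𝓝 f₀)) :
    Tendsto (fun i => exitT C (v i) (f i)) l (𝓝 (exitT C v₀ f₀)) := by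
  rw [tendsto_order]
  constructor
  · intro c hc
    have t1 : Tendsto (fun i => v i - c • f i) l (𝓝 (v₀ - c • f₀)) := tv.sub (tf.const_smul c)
    have hm := H.mem_of_lt_exitT hv₀ hf₀ hf0 hc
    filter_upwards [hf, t1.eventually (H.isOpen.mem_nhds hm)] with i h2 h3
    obtain ⟨s, hs, hsm⟩ := exists_gt H.isOpen h3
    exact hs.trans_le (H.le_exitT h2.1 h2.2 (H.sub_closure hsm))
  · intro c hc
    have t1 : Tendsto (fun i => v i - c • f i) l (𝓝 (v₀ - c • f₀)) := tv.sub (tf.const_smul c)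
    have hm : v₀ - c • f₀ ∈ (closure C)ᶜ := fun hmem =>
      absurd (H.le_exitT hf₀ hf0 hmem) (not_le.2 hc)
    filter_upwards [hv, hf, t1.eventually (isClosed_closure.isOpen_compl.mem_nhds hm)]
      with i h1 h2 h3
    by_contra hlt
    rcases (not_lt.1 hlt).eq_or_lt with heq | hlt
    · exact h3 (heq ▸ H.exitT_mem h1 h2.1 h2.2)
    · exact h3 (H.sub_closure (H.mem_of_lt_exitT h1 h2.1 h2.2 hlt))

/-! #### The multiplicative Hilbert distance -/

lemma D_comm (u v : V) : D C u v = D C v u := mul_comm _ _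

lemma D_smul_left {u v : V} (hu : u ∈ C) (hv : v ∈ C) {a : ℝ} (ha : 0 < a) :
    D C (a • u) v = D C u v := by
  unfold D
  rw [H.exitT_smul_left hu (H.sub_closure hv) (H.ne_zero hv) ha,
    H.exitT_smul_right hv (H.sub_closure hu) (H.ne_zero hu) ha]
  field_simp

lemma D_smul_right {u v : V} (hu : u ∈ C) (hv : v ∈ C) {a : ℝ} (ha : 0 < a) :
    D C u (a • v) = D C u v := by
  rw [H.D_comm, H.D_smul_left hv hu ha, H.D_comm]

lemma D_pos {u v : V} (hu : u ∈ C) (hv : v ∈ C) : 0 < D C u v :=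
  mul_pos (H.exitT_pos hu (H.sub_closure hv) (H.ne_zero hv))
    (H.exitT_pos hv (H.sub_closure hu) (H.ne_zero hu))

lemma D_le_one {u v : V} (hu : u ∈ C) (hv : v ∈ C) : D C u v ≤ 1 := by
  have := H.exitT_mul_le hu hv hu
  rwa [H.exitT_self hu] at this

lemma D_self {u : V} (hu : u ∈ C) : D C u u = 1 := by
  unfold D; rw [H.exitT_self hu, one_mul]

/-- A quantitative form of the fact that points at Hilbert distance zero are proportional. -/
lemma sub_mem_of_D {q y : V} (hq : q ∈ C) (hy : y ∈ C) :
    q - exitT C q y • y ∈ closure C ∧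
      h (q - exitT C q y • y) ≤ (1 - D C q y) * h q := by
  have h1 := H.exitT_mem hq (H.sub_closure hy) (H.ne_zero hy)
  have h2 := H.exitT_mem hy (H.sub_closure hq) (H.ne_zero hq)
  have h3 := H.smul_closure (H.exitT_pos hq (H.sub_closure hy) (H.ne_zero hy)).le h2
  refine ⟨h1, ?_⟩
  have h4 := H.nonneg h3
  simp only [map_sub, map_smul, smul_eq_mul, D] at h4 ⊢
  nlinarith

lemma eq_smul_of_D {q y : V} (hq : q ∈ C) (hy : y ∈ C) (hD : D C q y = 1) :
    ∃ c : ℝ, 0 < c ∧ q = c • y := by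
  obtain ⟨h1, h2⟩ := H.sub_mem_of_D hq hy
  refine ⟨_, H.exitT_pos hq (H.sub_closure hy) (H.ne_zero hy), ?_⟩
  rw [hD, sub_self, zero_mul] at h2
  exact sub_eq_zero.1 (H.eq_zero h1 h2)

lemma tendsto_of_D {ι : Type*} {l : Filter ι} {y : ι → V} {q : V} (hq : q ∈ C)
    (hy : ∀ᶠ i in l, y i ∈ C) (hD : Tendsto (fun i => D C q (y i)) l (𝓝 1)) :
    Tendsto (fun i => exitT C q (y i) • y i) l (𝓝 q) := by
  obtain ⟨B, hB, hb⟩ := H.exists_bound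
  rw [tendsto_iff_norm_sub_tendsto_zero]
  have hlim : Tendsto (fun i => B * ((1 - D C q (y i)) * h q)) l (𝓝 0) := by
    have := ((hD.const_sub 1).mul_const (h q)).const_mul B
    simpa using this
  refine squeeze_zero' (Eventually.of_forall fun i => norm_nonneg _) ?_ hlim
  filter_upwards [hy] with i hi
  obtain ⟨h1, h2⟩ := H.sub_mem_of_D hq hi
  rw [norm_sub_rev]
  exact (hb _ h1).trans (mul_le_mul_of_nonneg_left h2 hB.le)

lemma tendsto_D {ι : Type*} {l : Filter ι} {y : ι → V} {q : V} (hq : q ∈ C)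
    (hy : ∀ᶠ i in l, y i ∈ C) (ty : Tendsto y l (𝓝 q)) :
    Tendsto (fun i => D C q (y i)) l (𝓝 1) := by
  have hy' : ∀ᶠ i in l, y i ∈ closure C ∧ y i ≠ 0 :=
    hy.mono fun i hi => ⟨H.sub_closure hi, H.ne_zero hi⟩
  have hq' := H.sub_closure hq
  have hq0 := H.ne_zero hq
  have h1 := H.tendsto_exitT hq hq' hq0 (Eventually.of_forall fun _ => hq) hy'
    tendsto_const_nhds ty
  have h2 := H.tendsto_exitT hq hq' hq0 hy (Eventually.of_forall fun _ => ⟨hq', hq0⟩)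
    ty tendsto_const_nhds
  have := h1.mul h2
  rw [H.exitT_self hq, one_mul] at this
  exact this

/-! ### Chords and isometries -/

end PCone

/-- `w` and `f` span an open chord `{w + s • f | 0 < s}` of the cone `C`, that is, they represent
the two boundary points of a line of the domain. -/
structure IsChord (C : Set V) (w f : V) : Prop where
  left : w ∈ closure C
  left_not : w ∉ C
  right : f ∈ closure C
  right_not : f ∉ C
  mem : ∀ {s : ℝ}, 0 < s → w + s • f ∈ C

/-- `f` spans an extreme ray of the closed cone, lying on its boundary. -/
structure IsExtRay (C : Set V) (f : V) : Prop where
  mem : f ∈ closure C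
  notMem : f ∉ C
  ne_zero : f ≠ 0
  extreme : ∀ {u v : V} {c : ℝ}, 0 < c → u ∈ closure C → v ∈ closure C → u + v = c • f →
    ∃ θ : ℝ, 0 ≤ θ ∧ u = θ • f

/-- `T` induces an isometry between the projectivizations of `C` and `C'` for the Hilbert
metrics. -/
structure IsIso (C C' : Set V) (T : V → V) : Prop where
  maps : ∀ {v}, v ∈ C → T v ∈ C'
  surj : ∀ {w}, w ∈ C' → ∃ v ∈ C, ∃ c : ℝ, 0 < c ∧ T v = c • w
  dist : ∀ {u v}, u ∈ C → v ∈ C → D C' (T u) (T v) = D C u v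

section chords

variable {C C' : Set V} {h : V →L[ℝ] ℝ}

lemma IsChord.right_ne_zero {w f : V} (hc : IsChord C w f) : f ≠ 0 := by
  rintro rfl
  exact hc.left_not (by simpa using hc.mem one_pos)

lemma IsChord.smul_right (H : PCone C h) {w f : V} (hc : IsChord C w f) {a : ℝ} (ha : 0 < a) :
    IsChord C w (a • f) where
  left := hc.left
  left_not := hc.left_not
  right := H.smul_closure ha.le hc.right
  right_not := H.smul_notMem ha.le hc.right_not
  mem := fun {s} hs => by rw [smul_smul]; exact hc.mem (mul_pos hs ha)

lemma IsChord.smul_left (H : PCone C h) {w f : V} (hc : IsChord C w f) {a : ℝ} (ha : 0 < a) :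
    IsChord C (a • w) f where
  left := H.smul_closure ha.le hc.left
  left_not := H.smul_notMem ha.le hc.left_not
  right := hc.right
  right_not := hc.right_not
  mem := fun {s} hs => by
    have := H.smul ha (hc.mem (div_pos hs ha))
    rwa [smul_add, smul_smul, mul_div_cancel₀ _ ha.ne'] at this

/-- Two boundary vectors span a chord as soon as one of their positive combinations `w + b • f`
lies in the open cone. -/
lemma IsChord.mk' (H : PCone C h) {w f : V} (h1 : w ∈ closure C) (h2 : w ∉ C)
    (h3 : f ∈ closure C) (h4 : f ∉ C) {b : ℝ} (hb : 0 < b) (hm : w + b • f ∈ C) :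
    IsChord C w f where
  left := h1
  left_not := h2
  right := h3
  right_not := h4
  mem := fun {s} hs => by
    rcases le_or_gt b s with hbs | hbs
    · have := H.add_closure_left hm (H.smul_closure (sub_nonneg.2 hbs) h3)
      convert this using 1; module
    · have h5 : s / b < 1 := (div_lt_one hb).2 hbs
      have := H.add_closure_left (H.smul (div_pos hs hb) hm)
        (H.smul_closure (sub_nonneg.2 h5.le) h1)
      convert this using 1
      rw [smul_add, smul_smul, div_mul_cancel₀ _ hb.ne']; module

lemma IsChord.exitT_right (H : PCone C h) {w f : V} (hc : IsChord C w f) {s : ℝ} (hs : 0 < s) :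
    exitT C (w + s • f) f = s :=
  H.exitT_eq (hc.mem hs) hc.right hc.right_ne_zero (by simpa using hc.left)
    (by simpa using hc.left_not)

lemma IsChord.exitT_one (H : PCone C h) {w f : V} (hc : IsChord C w f) {s r : ℝ} (hs : 0 < s)
    (hr : s ≤ r) : exitT C (w + r • f) (w + s • f) = 1 := by
  have e : w + r • f - (1 : ℝ) • (w + s • f) = (r - s) • f := by module
  refine H.exitT_eq (hc.mem (hs.trans_le hr)) (H.sub_closure (hc.mem hs)) (H.ne_zero (hc.mem hs))
    ?_ ?_ <;> rw [e]
  · exact H.smul_closure (sub_nonneg.2 hr) hc.right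
  · exact H.smul_notMem (sub_nonneg.2 hr) hc.right_not

lemma IsChord.exitT_div (H : PCone C h) {w f : V} (hc : IsChord C w f) {s r : ℝ} (hs : 0 < s)
    (hr : s ≤ r) : exitT C (w + s • f) (w + r • f) = s / r := by
  have hr0 := hs.trans_le hr
  have e : w + s • f - (s / r) • (w + r • f) = (1 - s / r) • w := by
    rw [smul_add, smul_smul, div_mul_cancel₀ _ hr0.ne']; module
  have h1 : 0 ≤ 1 - s / r := sub_nonneg.2 ((div_le_one hr0).2 hr)
  refine H.exitT_eq (hc.mem hs) (H.sub_closure (hc.mem hr0)) (H.ne_zero (hc.mem hr0))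
    ?_ ?_ <;> rw [e]
  · exact H.smul_closure h1 hc.left
  · exact H.smul_notMem h1 hc.left_not

lemma IsChord.D_eq (H : PCone C h) {w f : V} (hc : IsChord C w f) {s r : ℝ} (hs : 0 < s)
    (hr : s ≤ r) : D C (w + s • f) (w + r • f) = s / r := by
  rw [D, hc.exitT_one H hs hr, hc.exitT_div H hs hr, mul_one]

lemma PCone.chord_of (H : PCone C h) {v f : V} (hv : v ∈ C) (hf : f ∈ closure C) (hf0 : f ≠ 0)
    (hfn : f ∉ C) : IsChord C (v - exitT C v f • f) f :=
  IsChord.mk' H (H.exitT_mem hv hf hf0) (H.exitT_notMem hf hf0) hf hfn (H.exitT_pos hv hf hf0)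
    (by simpa using hv)

/-- Two points of the cone lie on a chord, whose parametrization can be normalized using their
distance. -/
lemma PCone.exists_chord (H : PCone C h) {P Q : V} (hP : P ∈ C) (hQ : Q ∈ C) {r s : ℝ}
    (hr : 0 < r) (hrs : r < s) (hD : D C P Q = r / s) :
    ∃ w f, IsChord C w f ∧ (∃ c : ℝ, 0 < c ∧ P = c • (w + r • f)) ∧
      ∃ c : ℝ, 0 < c ∧ Q = c • (w + s • f) := by
  have hs := hr.trans hrs
  have ha := H.exitT_pos hQ (H.sub_closure hP) (H.ne_zero hP)
  have hb := H.exitT_pos hP (H.sub_closure hQ) (H.ne_zero hQ)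
  have f1 := H.exitT_mem hQ (H.sub_closure hP) (H.ne_zero hP)
  have f2 := H.exitT_notMem (v := Q) (H.sub_closure hP) (H.ne_zero hP)
  have w1 := H.exitT_mem hP (H.sub_closure hQ) (H.ne_zero hQ)
  have w2 := H.exitT_notMem (v := P) (H.sub_closure hQ) (H.ne_zero hQ)
  rw [D] at hD
  set a := exitT C Q P
  set b := exitT C P Q
  have hab : 0 < 1 - b * a := by rw [hD, sub_pos, div_lt_one hs]; exact hrs
  have e1 : (P - b • Q) + b • (Q - a • P) = (1 - b * a) • P := by module
  have e2 : (P - b • Q) + (1 / a) • (Q - a • P) = ((1 - b * a) / a) • Q := by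
    have : (1 / a) • (Q - a • P) = (1 / a) • Q - P := by
      rw [smul_sub, smul_smul, one_div_mul_cancel ha.ne', one_smul]
    rw [this]
    have : (1 - b * a) / a = 1 / a - b := by field_simp
    rw [this]; module
  have hch : IsChord C (P - b • Q) (Q - a • P) :=
    IsChord.mk' H w1 w2 f1 f2 hb (by rw [e1]; exact H.smul hab hP)
  have hbr : 0 < b / r := div_pos hb hr
  refine ⟨_, _, hch.smul_right H hbr, ⟨(1 - b * a)⁻¹, inv_pos.2 hab, ?_⟩,
    ⟨((1 - b * a) / a)⁻¹, inv_pos.2 (div_pos hab ha), ?_⟩⟩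
  · rw [smul_smul r, mul_div_cancel₀ _ hr.ne', e1, smul_smul, inv_mul_cancel₀ hab.ne', one_smul]
  · have : s * (b / r) = 1 / a := by
      field_simp at hD ⊢; linarith
    rw [smul_smul s, this, e2, smul_smul, inv_mul_cancel₀ (div_pos hab ha).ne', one_smul]

variable {T : V → V}

/-- Uniqueness of geodesics along a chord ending in an extreme ray: the image of such a chord
passes through the expected points of the chord between the images of two of its points. -/
lemma IsIso.between (H : PCone C h) (H' : PCone C' h) (hT : IsIso C C' T) {w f w' f' : V}
    (hc : IsChord C w f) (hf : IsExtRay C f) (hc' : IsChord C' w' f') {r₁ r₂ r₃ c₁ c₃ : ℝ}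
    (h0 : 0 < r₁) (h12 : r₁ < r₂) (h23 : r₂ < r₃) (hc₁ : 0 < c₁) (hc₃ : 0 < c₃)
    (e₁ : T (w + r₁ • f) = c₁ • (w' + r₁ • f')) (e₃ : T (w + r₃ • f) = c₃ • (w' + r₃ • f')) :
    ∃ c : ℝ, 0 < c ∧ T (w + r₂ • f) = c • (w' + r₂ • f') := by
  have h2 := h0.trans h12
  have h3 := h2.trans h23
  obtain ⟨z, hz, c₂, hc₂, ez⟩ := hT.surj (hc'.mem h2)
  have m1 := hc.mem h0
  have m2 := hc.mem h2
  have m3 := hc.mem h3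
  have D1 : D C (w + r₁ • f) z = r₁ / r₂ := by
    rw [← hT.dist m1 hz, e₁, ez, H'.D_smul_left (hc'.mem h0) (H'.smul hc₂ (hc'.mem h2)) hc₁,
      H'.D_smul_right (hc'.mem h0) (hc'.mem h2) hc₂, hc'.D_eq H' h0 h12.le]
  have D2 : D C z (w + r₃ • f) = r₂ / r₃ := by
    rw [← hT.dist hz m3, e₃, ez, H'.D_smul_left (hc'.mem h2) (H'.smul hc₃ (hc'.mem h3)) hc₂,
      H'.D_smul_right (hc'.mem h2) (hc'.mem h3) hc₃, hc'.D_eq H' h2 h23.le]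
  set a := w + r₁ • f with ha
  set c := w + r₃ • f with hcdef
  have t1 := H.exitT_mul_le m3 hz m1
  have t2 := H.exitT_mul_le m1 hz m3
  rw [hc.exitT_one H h0 (h12.trans h23).le] at t1
  rw [hc.exitT_div H h0 (h12.trans h23).le] at t2
  have pza := H.exitT_pos hz (H.sub_closure m1) (H.ne_zero m1)
  have pcz := H.exitT_pos m3 (H.sub_closure hz) (H.ne_zero hz)
  have paz := H.exitT_pos m1 (H.sub_closure hz) (H.ne_zero hz)
  have pzc := H.exitT_pos hz (H.sub_closure m3) (H.ne_zero m3)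
  have hprod : (exitT C c z * exitT C z a) * (exitT C a z * exitT C z c) = r₁ / r₃ := by
    have : (exitT C c z * exitT C z a) * (exitT C a z * exitT C z c) = D C a z * D C z c := by
      unfold D; ring
    rw [this, D1, D2]; field_simp
  -- Equality in the triangle inequality for `D` forces equality in both of its Funk parts.
  have hone : exitT C c z * exitT C z a = 1 := by
    refine le_antisymm t1 ?_
    by_contra hlt
    have hpos : 0 < exitT C a z * exitT C z c := mul_pos paz pzc
    have := mul_lt_mul_of_pos_right (not_le.1 hlt) hpos
    linarith
  have k1 := H.exitT_mem hz (H.sub_closure m1) (H.ne_zero m1)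
  have k2 := H.exitT_mem m3 (H.sub_closure hz) (H.ne_zero hz)
  have hsum : exitT C c z • (z - exitT C z a • a) + (c - exitT C c z • z) = (r₃ - r₁) • f := by
    have : exitT C c z • (z - exitT C z a • a) = exitT C c z • z - a := by
      rw [smul_sub, smul_smul, hone, one_smul]
    rw [this, ha, hcdef]; module
  -- By extremality both summands are multiples of `f`, so `z` lies on the chord.
  obtain ⟨θ, hθ, eθ⟩ := hf.extreme (sub_pos.2 (h12.trans h23))
    (H.smul_closure pcz.le k1) k2 hsum
  have hzeq : exitT C c z • z = w + (r₁ + θ) • f := by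
    rw [smul_sub, smul_smul, hone, one_smul] at eθ
    rw [sub_eq_iff_eq_add.1 eθ, ha]; module
  have D3 : D C a z = r₁ / (r₁ + θ) := by
    rw [← H.D_smul_right m1 hz pcz, hzeq, hc.D_eq H h0 (by linarith)]
  have hθ2 : r₁ + θ = r₂ := by
    rw [D1] at D3
    have : 0 < r₁ + θ := by linarith
    field_simp at D3
    linarith
  rw [hθ2] at hzeq
  have D4 : D C' (T (w + r₂ • f)) (T z) = 1 := by
    rw [hT.dist m2 hz, ← hzeq, H.D_smul_left hz hz pcz, H.D_self hz]
  obtain ⟨d, hd, ed⟩ := H'.eq_smul_of_D (hT.maps m2) (hT.maps hz) D4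
  exact ⟨d * c₂, mul_pos hd hc₂, by rw [ed, ez, smul_smul]⟩

/-- The isometry maps a chord ending in an extreme ray to a chord, projectively. -/
lemma IsIso.line (H : PCone C h) (H' : PCone C' h) (hT : IsIso C C' T) {w f : V}
    (hc : IsChord C w f) (hf : IsExtRay C f) :
    ∃ w' f', IsChord C' w' f' ∧
      ∀ s : ℝ, 0 < s → ∃ c : ℝ, 0 < c ∧ T (w + s • f) = c • (w' + s • f') := by
  -- On each compact part of the chord the image is a chord.
  have key : ∀ r₁ r₃ : ℝ, 0 < r₁ → r₁ < r₃ → ∃ w' f', IsChord C' w' f' ∧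
      ∀ s : ℝ, r₁ ≤ s → s ≤ r₃ → ∃ c : ℝ, 0 < c ∧ T (w + s • f) = c • (w' + s • f') := by
    intro r₁ r₃ h0 h13
    have m1 := hc.mem h0
    have m3 := hc.mem (h0.trans h13)
    obtain ⟨w', f', hc', ⟨c₁, hc₁, e₁⟩, ⟨c₃, hc₃, e₃⟩⟩ :=
      H'.exists_chord (hT.maps m1) (hT.maps m3) h0 h13
        (by rw [hT.dist m1 m3, hc.D_eq H h0 h13.le])
    refine ⟨w', f', hc', fun s h1 h3 => ?_⟩
    rcases h1.eq_or_lt with rfl | h1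
    · exact ⟨c₁, hc₁, e₁⟩
    rcases h3.eq_or_lt with rfl | h3
    · exact ⟨c₃, hc₃, e₃⟩
    exact hT.between H H' hc hf hc' h0 h1 h3 hc₁ hc₃ e₁ e₃
  obtain ⟨w', f', hc', hl⟩ := key 1 2 one_pos one_lt_two
  obtain ⟨p₁, hp₁, ep₁⟩ := hl 1 le_rfl one_le_two
  obtain ⟨p₂, hp₂, ep₂⟩ := hl 2 one_le_two le_rfl
  refine ⟨w', f', hc', fun s hs => ?_⟩
  obtain ⟨w₂, f₂, hc₂, hl₂⟩ := key (min 1 s) (max 2 s) (lt_min one_pos hs)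
    ((min_le_left _ _).trans_lt (one_lt_two.trans_le (le_max_left _ _)))
  obtain ⟨q₁, hq₁, eq₁⟩ := hl₂ 1 (min_le_left _ _) (one_le_two.trans (le_max_left _ _))
  obtain ⟨q₂, hq₂, eq₂⟩ := hl₂ 2 ((min_le_left _ _).trans one_le_two) (le_max_left _ _)
  obtain ⟨q, hq, eqs⟩ := hl₂ s (min_le_right _ _) (le_max_right _ _)
  -- The two parametrizations agree at `1` and `2`, hence everywhere.
  obtain ⟨a, ha, ea⟩ : ∃ a : ℝ, 0 < a ∧ w₂ + f₂ = a • (w' + f') := by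
    refine ⟨q₁⁻¹ * p₁, by positivity, ?_⟩
    rw [one_smul] at ep₁ eq₁
    rw [one_smul] at ep₁ eq₁
    rw [mul_smul, ← ep₁, eq₁, smul_smul, inv_mul_cancel₀ hq₁.ne', one_smul]
  obtain ⟨b, hb, eb⟩ : ∃ b : ℝ, 0 < b ∧ w₂ + (2 : ℝ) • f₂ = b • (w' + (2 : ℝ) • f') := by
    refine ⟨q₂⁻¹ * p₂, by positivity, ?_⟩
    rw [mul_smul, ← ep₂, eq₂, smul_smul, inv_mul_cancel₀ hq₂.ne', one_smul]
  have ef : f₂ = (b - a) • w' + (2 * b - a) • f' := by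
    have : f₂ = (w₂ + (2 : ℝ) • f₂) - (w₂ + f₂) := by module
    rw [this, ea, eb]; module
  have ew : w₂ = (2 * a - b) • w' + (2 * a - 2 * b) • f' := by
    have : w₂ = (2 : ℝ) • (w₂ + f₂) - (w₂ + (2 : ℝ) • f₂) := by module
    rw [this, ea, eb]; module
  have pos_comb : ∀ α β : ℝ, 0 < α → 0 < β → α • w' + β • f' ∈ C' := by
    intro α β hα hβ
    have := H'.smul hα (hc'.mem (div_pos hβ hα))
    rwa [smul_add, smul_smul, mul_div_cancel₀ _ hα.ne'] at this
  have hab : a = b := by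
    rcases lt_trichotomy a b with hlt | heq | hlt
    · exact absurd (ef ▸ pos_comb _ _ (by linarith) (by linarith)) hc₂.right_not
    · exact heq
    · exact absurd (ew ▸ pos_comb _ _ (by linarith) (by linarith)) hc₂.left_not
  subst hab
  refine ⟨q * a, mul_pos hq ha, ?_⟩
  rw [eqs, ef, ew]; module

end chords

/-! ### The normalized lift and affinity along boundary segments -/

/-- An isometry `T` between cones, together with an extreme ray `e` which it focuses at `e'`: the
images of all chords ending in `e` end in `e'`. -/
structure FocusData (C C' : Set V) (h : V →L[ℝ] ℝ) (T : V → V) (e e' : V) : Prop where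
  dom : PCone C h
  cod : PCone C' h
  iso : IsIso C C' T
  mem' : e' ∈ closure C'
  notMem' : e' ∉ C'
  ne_zero' : e' ≠ 0
  foc : ∀ {w w' f'}, IsChord C w e → IsChord C' w' f' →
    (∀ s : ℝ, 0 < s → ∃ c : ℝ, 0 < c ∧ T (w + s • e) = c • (w' + s • f')) →
    ∃ c : ℝ, 0 < c ∧ f' = c • e'
  ext : IsExtRay C e

/-- The lift of the isometry to a homogeneous map of cones, normalized by preserving the exit
parameter in the direction of the focusing ray. -/
def flift (C C' : Set V) (T : V → V) (e e' v : V) : V :=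
  (exitT C v e / exitT C' (T v) e') • T v

namespace FocusData

variable {C C' : Set V} {h : V →L[ℝ] ℝ} {T : V → V} {e e' : V} (X : FocusData C C' h T e e')
include X

local notation "F" => (flift C C' T e e' : V → V)

lemma flift_prop {v : V} (hv : v ∈ C) : ∃ c : ℝ, 0 < c ∧ F v = c • T v :=
  ⟨_, div_pos (X.dom.exitT_pos hv X.ext.mem X.ext.ne_zero)
    (X.cod.exitT_pos (X.iso.maps hv) X.mem' X.ne_zero'), rfl⟩

lemma flift_mem {v : V} (hv : v ∈ C) : F v ∈ C' := by
  obtain ⟨c, hc, ec⟩ := X.flift_prop hv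
  rw [ec]; exact X.cod.smul hc (X.iso.maps hv)

lemma flift_exitT {v : V} (hv : v ∈ C) : exitT C' (F v) e' = exitT C v e := by
  have h1 := X.cod.exitT_pos (X.iso.maps hv) X.mem' X.ne_zero'
  have h2 := X.dom.exitT_pos hv X.ext.mem X.ext.ne_zero
  rw [flift, X.cod.exitT_smul_left (X.iso.maps hv) X.mem' X.ne_zero' (div_pos h2 h1),
    div_mul_cancel₀ _ h1.ne']

lemma flift_D {u v : V} (hu : u ∈ C) (hv : v ∈ C) : D C' (F u) (F v) = D C u v := by
  obtain ⟨c, hc, ec⟩ := X.flift_prop hu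
  obtain ⟨d, hd, ed⟩ := X.flift_prop hv
  rw [ec, ed, X.cod.D_smul_left (X.iso.maps hu) (X.cod.smul hd (X.iso.maps hv)) hc,
    X.cod.D_smul_right (X.iso.maps hu) (X.iso.maps hv) hd, X.iso.dist hu hv]

lemma eq_of_exitT {u v : V} (hu : u ∈ C') {c : ℝ} (hc : 0 < c) (hv : v = c • u)
    (ht : exitT C' v e' = exitT C' u e') : v = u := by
  rw [hv, X.cod.exitT_smul_left hu X.mem' X.ne_zero' hc] at ht
  have := X.cod.exitT_pos hu X.mem' X.ne_zero'
  have : c = 1 := by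
    have h3 : (c - 1) * exitT C' u e' = 0 := by linarith
    rcases mul_eq_zero.1 h3 with h4 | h4
    · linarith
    · exact absurd h4 this.ne'
  rw [hv, this, one_smul]

lemma flift_eq {u v : V} (hv : v ∈ C) (hu : u ∈ C') {c : ℝ} (hc : 0 < c) (hT : T v = c • u)
    (ht : exitT C v e = exitT C' u e') : F v = u := by
  obtain ⟨d, hd, ed⟩ := X.flift_prop hv
  refine X.eq_of_exitT hu (mul_pos hd hc) (by rw [ed, hT, smul_smul]) ?_
  rw [X.flift_exitT hv, ht]

lemma flift_smul {v : V} (hv : v ∈ C) {c : ℝ} (hc : 0 < c) : F (c • v) = c • F v := by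
  have hcv := X.dom.smul hc hv
  have hD : D C' (F (c • v)) (c • F v) = 1 := by
    rw [X.cod.D_smul_right (X.flift_mem hcv) (X.flift_mem hv) hc, X.flift_D hcv hv,
      X.dom.D_smul_left hv hv hc, X.dom.D_self hv]
  obtain ⟨d, hd, ed⟩ := X.cod.eq_smul_of_D (X.flift_mem hcv) (X.cod.smul hc (X.flift_mem hv)) hD
  refine X.eq_of_exitT (X.cod.smul hc (X.flift_mem hv)) hd ed ?_
  rw [X.flift_exitT hcv, X.dom.exitT_smul_left hv X.ext.mem X.ext.ne_zero hc,
    X.cod.exitT_smul_left (X.flift_mem hv) X.mem' X.ne_zero' hc, X.flift_exitT hv]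

lemma flift_inj {u v : V} (hu : u ∈ C) (hv : v ∈ C) (huv : F u = F v) : u = v := by
  have hD : D C u v = 1 := by
    rw [← X.flift_D hu hv, huv, X.cod.D_self (X.flift_mem hv)]
  obtain ⟨c, hc, ec⟩ := X.dom.eq_smul_of_D hu hv hD
  have h1 := X.flift_exitT hu
  rw [huv, X.flift_exitT hv, ec, X.dom.exitT_smul_left hv X.ext.mem X.ext.ne_zero hc] at h1
  have h2 := X.dom.exitT_pos hv X.ext.mem X.ext.ne_zero
  have : c = 1 := by
    have h3 : (c - 1) * exitT C v e = 0 := by linarith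
    rcases mul_eq_zero.1 h3 with h4 | h4
    · linarith
    · exact absurd h4 h2.ne'
  rw [ec, this, one_smul]

lemma flift_chord {w : V} (hc : IsChord C w e) :
    ∃ w', IsChord C' w' e' ∧ ∀ s : ℝ, 0 < s → F (w + s • e) = w' + s • e' := by
  obtain ⟨w', f', hc', hl⟩ := X.iso.line X.dom X.cod hc X.ext
  obtain ⟨c, hcpos, rfl⟩ := X.foc hc hc' hl
  have hch : IsChord C' (c⁻¹ • w') e' := by
    have := (hc'.smul_right X.cod (inv_pos.2 hcpos)).smul_left X.cod (inv_pos.2 hcpos)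
    rwa [smul_smul c⁻¹ c, inv_mul_cancel₀ hcpos.ne', one_smul] at this
  refine ⟨_, hch, fun s hs => ?_⟩
  obtain ⟨d, hd, ed⟩ := hl s hs
  refine X.flift_eq (hc.mem hs) (hch.mem hs) (mul_pos hd hcpos) ?_ ?_
  · have ee : c • (c⁻¹ • w' + s • e') = w' + s • c • e' := by
      rw [smul_add, smul_smul, mul_inv_cancel₀ hcpos.ne', one_smul, smul_comm]
    rw [ed, mul_smul, ee]
  · rw [hc.exitT_right X.dom hs, hch.exitT_right X.cod hs]

lemma flift_add {v : V} (hv : v ∈ C) {k : ℝ} (hk : 0 ≤ k) : F (v + k • e) = F v + k • e' := by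
  have hc := X.dom.chord_of hv X.ext.mem X.ext.ne_zero X.ext.notMem
  have ht := X.dom.exitT_pos hv X.ext.mem X.ext.ne_zero
  obtain ⟨w', -, hw⟩ := X.flift_chord hc
  have h1 := hw _ ht
  have h2 := hw (exitT C v e + k) (by linarith)
  rw [sub_add_cancel] at h1
  have e1 : v - exitT C v e • e + (exitT C v e + k) • e = v + k • e := by module
  rw [e1] at h2
  rw [h1, h2]; module

lemma flift_line {w f : V} (hc : IsChord C w f) (hf : IsExtRay C f) :
    ∃ (w' f' : V) (μ : ℝ → ℝ), IsChord C' w' f' ∧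
      ∀ s : ℝ, 0 < s → 0 < μ s ∧ F (w + s • f) = μ s • (w' + s • f') := by
  obtain ⟨w', f', hc', hl⟩ := X.iso.line X.dom X.cod hc hf
  have : ∀ s : ℝ, ∃ m : ℝ, 0 < s → 0 < m ∧ F (w + s • f) = m • (w' + s • f') := by
    intro s
    by_cases hs : 0 < s
    · obtain ⟨c, hcp, ec⟩ := hl s hs
      obtain ⟨d, hd, ed⟩ := X.flift_prop (hc.mem hs)
      exact ⟨d * c, fun _ => ⟨mul_pos hd hcp, by rw [ed, ec, smul_smul]⟩⟩
    · exact ⟨0, fun h => absurd h hs⟩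
  choose μ hμ using this
  exact ⟨w', f', μ, hc', hμ⟩

/-- If the segment from `e` to `f` is in the boundary, the image of a chord towards `f` does not
end at a point joined to `e'` through the interior: otherwise a family of points converging
to an interior point of the target would come from a family approaching the segment. -/
lemma not_interior {w f w' f' : V} {μ : ℝ → ℝ} (hc : IsChord C w f) (hf : f ∈ closure C)
    (hef : ∀ a b : ℝ, 0 ≤ a → 0 ≤ b → a • e + b • f ∉ C)
    (hμ : ∀ s : ℝ, 0 < s → 0 < μ s ∧ F (w + s • f) = μ s • (w' + s • f')) {k : ℝ}
    (hk : 0 ≤ k) : f' + k • e' ∉ C' := by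
  intro hq
  obtain ⟨z, hz, c, hcpos, ez⟩ := X.iso.surj hq
  have hec : e ∈ closure C := X.ext.mem
  -- `y r` is the preimage of `w' / r + f' + k e'`, up to scaling.
  let y : ℝ → V := fun r => r⁻¹ • w + f + (μ r * k) • e
  have hy : ∀ r : ℝ, 0 < r → y r ∈ C ∧ F (y r) = μ r • (r⁻¹ • w' + f' + k • e') := by
    intro r hr
    obtain ⟨hm, hF⟩ := hμ r hr
    have hmem := X.dom.smul (inv_pos.2 hr) (hc.mem hr)
    have e1 : y r = r⁻¹ • (w + r • f) + (μ r * k) • e := by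
      simp only [y]; rw [smul_add, smul_smul, inv_mul_cancel₀ hr.ne', one_smul]
    have hk' : 0 ≤ μ r * k := mul_nonneg hm.le hk
    refine ⟨?_, ?_⟩
    · rw [e1]; exact X.dom.add_closure_left hmem (X.dom.smul_closure hk' hec)
    · rw [e1, X.flift_add hmem hk', X.flift_smul (hc.mem hr) (inv_pos.2 hr), hF,
        smul_comm r⁻¹ (μ r), smul_add r⁻¹, smul_smul r⁻¹ r, inv_mul_cancel₀ hr.ne', one_smul,
        mul_smul, ← smul_add]
  have tinv : Tendsto (fun r : ℝ => r⁻¹) atTop (𝓝 0) := tendsto_inv_atTop_zero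
  have tq : Tendsto (fun r : ℝ => r⁻¹ • w' + f' + k • e') atTop (𝓝 (f' + k • e')) := by
    have := ((tinv.smul_const w').add_const f').add_const (k • e')
    simpa using this
  have hq' : ∀ r : ℝ, 0 < r → r⁻¹ • w' + f' + k • e' ∈ C' := by
    intro r hr
    have := X.cod.smul (inv_pos.2 (hμ r hr).1) (X.flift_mem (hy r hr).1)
    rwa [(hy r hr).2, smul_smul, inv_mul_cancel₀ (hμ r hr).1.ne', one_smul] at this
  have tD := X.cod.tendsto_D hq (eventually_atTop.2 ⟨1, fun r hr => hq' r (by linarith)⟩) tq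
  have tD' : Tendsto (fun r => D C z (y r)) atTop (𝓝 1) := by
    refine tD.congr' ?_
    filter_upwards [eventually_gt_atTop 0] with r hr
    obtain ⟨d, hd, ed⟩ := X.flift_prop hz
    rw [← X.flift_D hz (hy r hr).1, (hy r hr).2, ed, ez, smul_smul,
      X.cod.D_smul_right (X.cod.smul (mul_pos hd hcpos) hq) (hq' r hr) (hμ r hr).1,
      X.cod.D_smul_left hq (hq' r hr) (mul_pos hd hcpos)]
  have tz := X.dom.tendsto_of_D hz
    (eventually_atTop.2 ⟨1, fun r hr => (hy r (by linarith)).1⟩) tD'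
  have hfp : 0 < h f := X.dom.pos_of_ne hf hc.right_ne_zero
  -- The `w`-component tends to zero because heights stay bounded.
  have tw : Tendsto (fun r => (exitT C z (y r) * r⁻¹) • w) atTop (𝓝 0) := by
    have th : Tendsto (fun r => h (exitT C z (y r) • y r) / h f * r⁻¹) atTop (𝓝 0) := by
      have := (((h.continuous.tendsto z).comp tz).div_const (h f)).mul tinv
      simpa using this
    have ts : Tendsto (fun r => exitT C z (y r) * r⁻¹) atTop (𝓝 0) := by
      refine squeeze_zero' ?_ ?_ th
      · filter_upwards [eventually_gt_atTop 0] with r hr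
        have := X.dom.exitT_pos hz (X.dom.sub_closure (hy r hr).1) (X.dom.ne_zero (hy r hr).1)
        positivity
      · filter_upwards [eventually_gt_atTop 0] with r hr
        have hp := X.dom.exitT_pos hz (X.dom.sub_closure (hy r hr).1) (X.dom.ne_zero (hy r hr).1)
        refine mul_le_mul_of_nonneg_right ?_ (inv_pos.2 hr).le
        rw [le_div_iff₀ hfp, map_smul, smul_eq_mul]
        refine mul_le_mul_of_nonneg_left ?_ hp.le
        have h1 := X.dom.nonneg hc.left
        have h2 := X.dom.nonneg hec
        have h3 := (hμ r hr).1
        simp only [y, map_add, map_smul, smul_eq_mul]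
        have : 0 ≤ r⁻¹ * h w := by positivity
        have : 0 ≤ μ r * k * h e := by positivity
        linarith
    simpa using ts.smul_const w
  have tz' := tz.sub tw
  rw [sub_zero] at tz'
  have hcl : z ∈ Cᶜ := by
    refine X.dom.isOpen.isClosed_compl.mem_of_tendsto tz' ?_
    filter_upwards [eventually_gt_atTop 0] with r hr
    have hp := X.dom.exitT_pos hz (X.dom.sub_closure (hy r hr).1) (X.dom.ne_zero (hy r hr).1)
    have h3 := (hμ r hr).1
    have := hef (exitT C z (y r) * (μ r * k)) (exitT C z (y r)) (by positivity) hp.le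
    have ee : exitT C z (y r) • y r - (exitT C z (y r) * r⁻¹) • w =
        (exitT C z (y r) * (μ r * k)) • e + exitT C z (y r) • f := by
      generalize exitT C z (y r) = q
      simp only [y]
      module
    rw [mem_compl_iff, ee]
    exact this
  exact hcl hz

/-- The scaling factor along a chord towards `f` is constant if the segment from `e` to `f` is in
the boundary. It is detected by the horofunction of the point `e`. -/
lemma affine_of_boundary {v f : V} (hv : v ∈ C) (hf : IsExtRay C f) (hef : e + f ∉ C) :
    ∃ W, ∀ s : ℝ, 0 ≤ s → F (v + s • f) = F v + s • W := by
  have hec : e ∈ closure C := X.ext.mem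
  have hcomb : ∀ a b : ℝ, 0 ≤ a → 0 ≤ b → a • e + b • f ∉ C := by
    intro a b ha hb hab
    apply hef
    have hm : 0 < max a b := by
      by_contra hn
      have h1 : a = 0 := le_antisymm ((le_max_left _ _).trans (not_lt.1 hn)) ha
      have h2 : b = 0 := le_antisymm ((le_max_right _ _).trans (not_lt.1 hn)) hb
      subst h1 h2
      simp only [zero_smul, add_zero] at hab
      exact X.dom.zero_notMem hab
    rw [← X.dom.smul_mem_iff hm]
    have := X.dom.add_closure_left (X.dom.add_closure_left hab
      (X.dom.smul_closure (sub_nonneg.2 (le_max_left a b)) hec))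
      (X.dom.smul_closure (sub_nonneg.2 (le_max_right a b)) hf.mem)
    convert this using 1; module
  have hc := X.dom.chord_of hv hf.mem hf.ne_zero hf.notMem
  have ht := X.dom.exitT_pos hv hf.mem hf.ne_zero
  set t := exitT C v f
  set w := v - t • f with hw
  obtain ⟨w', f', μ, hc', hμ⟩ := X.flift_line hc hf
  have hno : ∀ k : ℝ, 0 ≤ k → f' + k • e' ∉ C' := fun k hk =>
    X.not_interior hc hf.mem hcomb hμ hk
  have hcomb' : ∀ a b : ℝ, 0 ≤ a → 0 ≤ b → a • f' + b • e' ∉ C' := by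
    intro a b ha hb hab
    rcases ha.eq_or_lt with rfl | ha
    · rw [zero_smul, zero_add] at hab
      exact X.cod.smul_notMem hb X.notMem' hab
    · refine hno (b / a) (by positivity) ?_
      rw [← X.cod.smul_mem_iff ha]
      rwa [smul_add, smul_smul, mul_div_cancel₀ _ ha.ne']
  have hconst : ∀ s r : ℝ, 0 < s → s ≤ r → μ s = μ r := by
    intro s r hs hsr
    have hr := hs.trans_le hsr
    obtain ⟨ps, es⟩ := hμ s hs
    obtain ⟨pr, er⟩ := hμ r hr
    have hms := hc.mem hs
    have hmr := hc.mem hr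
    have hms' := hc'.mem hs
    have hmr' := hc'.mem hr
    -- Compare the distances from `w + s • f` to `w + r • f + k • e` and between their images; the
    -- factors computed in `q1` and `q2` are exact because the segment from `e` to `f` and its
    -- image lie in the boundary. The limit `k → ∞` relates the exit parameters towards `e`, `e'`.
    have hk : ∀ k : ℝ, 0 < k → exitT C (w + s • f) (k⁻¹ • (w + r • f) + e) =
        μ r * exitT C' (w' + s • f') ((k⁻¹ * μ r) • (w' + r • f') + e') := by
      intro k hk
      have hk' := inv_pos.2 hk
      have m1 : k⁻¹ • (w + r • f) + e ∈ C :=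
        X.dom.add_closure_left (X.dom.smul hk' hmr) hec
      have m2 : (k⁻¹ * μ r) • (w' + r • f') + e' ∈ C' :=
        X.cod.add_closure_left (X.cod.smul (mul_pos hk' pr) hmr') X.mem'
      have hD := X.flift_D hms (X.dom.smul hk m1)
      have e1 : k • (k⁻¹ • (w + r • f) + e) = (w + r • f) + k • e := by
        rw [smul_add, smul_smul, mul_inv_cancel₀ hk.ne', one_smul]
      have e2 : F ((w + r • f) + k • e) = k • ((k⁻¹ * μ r) • (w' + r • f') + e') := by
        rw [X.flift_add hmr hk.le, er, smul_add k, smul_smul k (k⁻¹ * μ r), ← mul_assoc,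
          mul_inv_cancel₀ hk.ne', one_mul]
      have m2k := X.cod.smul hk m2
      rw [e1, e2, es, X.cod.D_smul_left hms' m2k ps] at hD
      have q1 : exitT C ((w + r • f) + k • e) (w + s • f) = 1 := by
        have ee : (w + r • f) + k • e - (1 : ℝ) • (w + s • f) = k • e + (r - s) • f := by module
        refine X.dom.exitT_eq (e1 ▸ X.dom.smul hk m1) (X.dom.sub_closure hms)
          (X.dom.ne_zero hms) ?_ ?_ <;> rw [ee]
        · exact X.dom.add_closure (X.dom.smul_closure hk.le hec)
            (X.dom.smul_closure (sub_nonneg.2 hsr) hf.mem)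
        · exact hcomb _ _ hk.le (sub_nonneg.2 hsr)
      have q2 : exitT C' (k • ((k⁻¹ * μ r) • (w' + r • f') + e')) (w' + s • f') = μ r := by
        have ee : k • ((k⁻¹ * μ r) • (w' + r • f') + e') - μ r • (w' + s • f') =
            (μ r * (r - s)) • f' + k • e' := by
          rw [smul_add k, smul_smul k (k⁻¹ * μ r), ← mul_assoc, mul_inv_cancel₀ hk.ne', one_mul]
          module
        have hn : 0 ≤ μ r * (r - s) := mul_nonneg pr.le (sub_nonneg.2 hsr)
        refine X.cod.exitT_eq m2k (X.cod.sub_closure hms') (X.cod.ne_zero hms') ?_ ?_ <;> rw [ee]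
        · exact X.cod.add_closure (X.cod.smul_closure hn hc'.right)
            (X.cod.smul_closure hk.le X.mem')
        · exact hcomb' _ _ hn hk.le
      rw [D, D, q1, q2, mul_one, ← e1,
        X.dom.exitT_smul_right hms (X.dom.sub_closure m1) (X.dom.ne_zero m1) hk,
        X.cod.exitT_smul_right hms' (X.cod.sub_closure m2) (X.cod.ne_zero m2) hk] at hD
      rw [div_mul_eq_mul_div, div_left_inj' hk.ne'] at hD
      rw [← hD, mul_comm]
    have tinv : Tendsto (fun r : ℝ => r⁻¹) atTop (𝓝 0) := tendsto_inv_atTop_zero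
    have l1 : Tendsto (fun k : ℝ => exitT C (w + s • f) (k⁻¹ • (w + r • f) + e)) atTop
        (𝓝 (exitT C (w + s • f) e)) := by
      refine X.dom.tendsto_exitT hms hec X.ext.ne_zero (Eventually.of_forall fun _ => hms) ?_
        tendsto_const_nhds ?_
      · filter_upwards [eventually_gt_atTop 0] with k hk
        have := X.dom.add_closure_left (X.dom.smul (inv_pos.2 hk) hmr) hec
        exact ⟨X.dom.sub_closure this, X.dom.ne_zero this⟩
      · simpa using (tinv.smul_const (w + r • f)).add_const e
    have l2 : Tendsto (fun k : ℝ => μ r *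
        exitT C' (w' + s • f') ((k⁻¹ * μ r) • (w' + r • f') + e')) atTop
        (𝓝 (μ r * exitT C' (w' + s • f') e')) := by
      refine Tendsto.const_mul _ (X.cod.tendsto_exitT hms' X.mem' X.ne_zero'
        (Eventually.of_forall fun _ => hms') ?_ tendsto_const_nhds ?_)
      · filter_upwards [eventually_gt_atTop 0] with k hk
        have := X.cod.add_closure_left
          (X.cod.smul (mul_pos (inv_pos.2 hk) pr) hmr') X.mem'
        exact ⟨X.cod.sub_closure this, X.cod.ne_zero this⟩
      · simpa using ((tinv.mul_const (μ r)).smul_const (w' + r • f')).add_const e'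
    have heq := tendsto_nhds_unique (l1.congr' (by
      filter_upwards [eventually_gt_atTop 0] with k hkp using hk k hkp)) l2
    rw [← X.flift_exitT hms, es, X.cod.exitT_smul_left hms' X.mem' X.ne_zero' ps] at heq
    exact mul_right_cancel₀ (X.cod.exitT_pos hms' X.mem' X.ne_zero').ne' heq
  refine ⟨μ t • f', fun s hs => ?_⟩
  have e1 : v = w + t • f := by rw [hw]; module
  have e2 : v + s • f = w + (t + s) • f := by rw [hw]; module
  rw [e2, (hμ (t + s) (by linarith)).2, ← hconst t (t + s) ht (by linarith)]
  rw [e1, (hμ t ht).2]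
  module

end FocusData
end HilbertCone

/-! ### Affinity along segments through the interior -/

namespace HilbertCone
open Filter Topology

variable {V : Type*} [NormedAddCommGroup V] [NormedSpace ℝ V]

lemma PCone.smul_boundary_notMem {C : Set V} {h : V →L[ℝ] ℝ} (H : PCone C h) {u : V}
    (hu : u ∈ closure C) (hn : u ∉ C) (r : ℝ) : r • u ∉ C := by
  rcases le_or_gt 0 r with hr | hr
  · exact H.smul_notMem hr hn
  · intro hm
    have h1 := H.pos hm
    rw [map_smul, smul_eq_mul] at h1
    nlinarith [H.nonneg hu]

lemma IsChord.left_ne_zero {C : Set V} {w f : V} (hc : IsChord C w f) : w ≠ 0 := by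
  rintro rfl
  exact hc.right_not (by simpa using hc.mem one_pos)

/-- The two ends of a chord are linearly independent. -/
lemma IsChord.indep {C : Set V} {h : V →L[ℝ] ℝ} (H : PCone C h) {w f : V} (hc : IsChord C w f)
    {p q : ℝ} (hpq : p • w + q • f = 0) : p = 0 ∧ q = 0 := by
  by_cases hp : p = 0
  · subst hp
    rw [zero_smul, zero_add, smul_eq_zero] at hpq
    exact ⟨rfl, hpq.resolve_right hc.right_ne_zero⟩
  · exfalso
    have hw : w + (1 : ℝ) • f = (1 - q / p) • f := by
      have : w = p⁻¹ • (p • w) := by rw [smul_smul, inv_mul_cancel₀ hp, one_smul]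
      rw [this, eq_neg_of_add_eq_zero_left hpq, smul_neg, smul_smul, div_eq_inv_mul]
      module
    exact H.smul_boundary_notMem hc.right hc.right_not _ (hw ▸ hc.mem one_pos)

namespace FocusData

variable {C C' : Set V} {h : V →L[ℝ] ℝ} {T : V → V} {e e' : V} (X : FocusData C C' h T e e')
include X

local notation "F" => (flift C C' T e e' : V → V)

/-- If the segment from `e` to `f` passes through the interior, all chords towards `f` are mapped
to chords towards the same point `z`, and the scaling factor is asymptotically constant. -/
lemma asymp_factor {w f z : V} (hc : IsChord C w f) (hf : IsExtRay C f) (hfe : IsChord C f e)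
    (hz : IsChord C' z e') (hzF : ∀ k : ℝ, 0 < k → F (f + k • e) = z + k • e') :
    ∃ (w'' : V) (ν : ℝ → ℝ), Tendsto ν atTop (𝓝 1) ∧
      ∀ s : ℝ, 0 < s → 0 < ν s ∧ F (w + s • f) = ν s • (w'' + s • z) := by
  obtain ⟨w', f', μ, hc', hμ⟩ := X.flift_line hc hf
  have hec : e ∈ closure C := X.ext.mem
  have hq := hfe.mem one_pos
  have hq' := hz.mem one_pos
  have hFq := hzF 1 one_pos
  let y : ℝ → V := fun s => s⁻¹ • w + f + (1 : ℝ) • e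
  have hy : ∀ s : ℝ, 0 < s → y s ∈ C ∧
      F (y s) = (s⁻¹ * μ s) • w' + μ s • f' + (1 : ℝ) • e' := by
    intro s hs
    have hmem := X.dom.smul (inv_pos.2 hs) (hc.mem hs)
    have e1 : y s = s⁻¹ • (w + s • f) + (1 : ℝ) • e := by
      simp only [y]; rw [smul_add s⁻¹, smul_smul, inv_mul_cancel₀ hs.ne', one_smul ℝ f]
    have e2 : s⁻¹ • μ s • (w' + s • f') = (s⁻¹ * μ s) • w' + μ s • f' := by
      rw [smul_smul, smul_add, smul_smul (s⁻¹ * μ s) s]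
      congr 2
      field_simp
    refine ⟨?_, ?_⟩
    · rw [e1]; exact X.dom.add_closure_left hmem (X.dom.smul_closure zero_le_one hec)
    · rw [e1, X.flift_add hmem zero_le_one, X.flift_smul (hc.mem hs) (inv_pos.2 hs),
        (hμ s hs).2, e2]
  have hyev : ∀ᶠ s in atTop, y s ∈ C :=
    (eventually_gt_atTop 0).mono fun s hs => (hy s hs).1
  have tinv : Tendsto (fun r : ℝ => r⁻¹) atTop (𝓝 0) := tendsto_inv_atTop_zero
  have ty : Tendsto y atTop (𝓝 (f + (1 : ℝ) • e)) := by
    have := ((tinv.smul_const w).add_const f).add_const ((1 : ℝ) • e)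
    rwa [zero_smul, zero_add] at this
  have tD := X.dom.tendsto_D hq hyev ty
  have tD' : Tendsto (fun s => D C' (z + (1 : ℝ) • e') (F (y s))) atTop (𝓝 1) := by
    refine tD.congr' ?_
    filter_upwards [eventually_gt_atTop 0] with s hs
    rw [← hFq, X.flift_D hq (hy s hs).1]
  have tF := X.cod.tendsto_of_D hq' (hyev.mono fun s hs => X.flift_mem hs) tD'
  set θ : ℝ → ℝ := fun s => exitT C' (z + (1 : ℝ) • e') (F (y s)) with hθ
  have hθpos : ∀ s, 0 < s → 0 < θ s := fun s hs =>
    X.cod.exitT_pos hq' (X.cod.sub_closure (X.flift_mem (hy s hs).1))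
      (X.cod.ne_zero (X.flift_mem (hy s hs).1))
  -- The normalization of the lift forces the scaling `θ` to tend to `1`.
  have t1 : Tendsto (fun s => θ s * exitT C (y s) e) atTop (𝓝 1) := by
    have := X.cod.tendsto_exitT hq' X.mem' X.ne_zero'
      (l := atTop) (v := fun s => θ s • F (y s)) (f := fun _ => e')
      ((eventually_gt_atTop 0).mono fun s hs =>
        X.cod.smul (hθpos s hs) (X.flift_mem (hy s hs).1))
      (Eventually.of_forall fun _ => ⟨X.mem', X.ne_zero'⟩) tF tendsto_const_nhds
    rw [hz.exitT_right X.cod one_pos] at this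
    refine this.congr' ?_
    filter_upwards [eventually_gt_atTop 0] with s hs
    rw [X.cod.exitT_smul_left (X.flift_mem (hy s hs).1) X.mem' X.ne_zero' (hθpos s hs),
      X.flift_exitT (hy s hs).1]
  have t2 : Tendsto (fun s => exitT C (y s) e) atTop (𝓝 1) := by
    have := X.dom.tendsto_exitT hq hec X.ext.ne_zero hyev
      (f := fun _ => e) (Eventually.of_forall fun _ => ⟨hec, X.ext.ne_zero⟩) ty tendsto_const_nhds
    rwa [hfe.exitT_right X.dom one_pos] at this
  have tθ : Tendsto θ atTop (𝓝 1) := by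
    have := t1.div t2 one_ne_zero
    rw [div_one] at this
    refine this.congr' ?_
    filter_upwards [eventually_gt_atTop 0] with s hs
    have := X.dom.exitT_pos (hy s hs).1 hec X.ext.ne_zero
    simp only [Pi.div_apply]
    field_simp
  have tG : Tendsto (fun s => (s⁻¹ * μ s) • w' + μ s • f') atTop (𝓝 z) := by
    have := ((tθ.inv₀ one_ne_zero).smul tF).sub_const ((1 : ℝ) • e')
    rw [inv_one, one_smul ℝ (z + (1 : ℝ) • e'), add_sub_cancel_right] at this
    refine this.congr' ?_
    filter_upwards [eventually_gt_atTop 0] with s hs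
    rw [smul_smul, inv_mul_cancel₀ (hθpos s hs).ne', one_smul, (hy s hs).2, add_sub_cancel_right]
  have hfp : 0 < h f' := X.cod.pos_of_ne hc'.right hc'.right_ne_zero
  have hzp : 0 < h z := X.cod.pos_of_ne hz.left hz.left_ne_zero
  have ts : Tendsto (fun s => s⁻¹ * μ s) atTop (𝓝 0) := by
    have th : Tendsto (fun s => s⁻¹ * (h ((s⁻¹ * μ s) • w' + μ s • f') / h f')) atTop (𝓝 0) := by
      have := tinv.mul (((h.continuous.tendsto z).comp tG).div_const (h f'))
      simpa using this
    refine squeeze_zero' ?_ ?_ th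
    · filter_upwards [eventually_gt_atTop 0] with s hs
      have := (hμ s hs).1
      positivity
    · filter_upwards [eventually_gt_atTop 0] with s hs
      have h1 := (hμ s hs).1
      refine mul_le_mul_of_nonneg_left ?_ (inv_pos.2 hs).le
      rw [le_div_iff₀ hfp, map_add, map_smul, map_smul, smul_eq_mul, smul_eq_mul]
      have := X.cod.nonneg hc'.left
      have : 0 ≤ s⁻¹ * μ s * h w' := by positivity
      linarith
  have tf : Tendsto (fun s => μ s • f') atTop (𝓝 z) := by
    have := tG.sub (ts.smul_const w')
    simpa using this
  have tμ : Tendsto μ atTop (𝓝 (h z / h f')) := by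
    have := ((h.continuous.tendsto z).comp tf).div_const (h f')
    refine this.congr fun s => ?_
    simp only [Function.comp, map_smul, smul_eq_mul]
    field_simp
  have hzf : (h z / h f') • f' = z := tendsto_nhds_unique (tμ.smul_const f') tf
  have hcp : 0 < h z / h f' := div_pos hzp hfp
  set c := h z / h f'
  refine ⟨c • w', fun s => μ s / c, ?_, fun s hs => ⟨div_pos (hμ s hs).1 hcp, ?_⟩⟩
  · have := tμ.div_const c
    rwa [div_self hcp.ne'] at this
  · rw [(hμ s hs).2, ← hzf, smul_comm s c f', ← smul_add, smul_smul, div_mul_cancel₀ _ hcp.ne']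

/-- Affinity along rays towards `f` when the segment from `e` to `f` passes through the interior:
the factors along the parallel chords through `v` and `v + e` must agree. -/
lemma affine_of_interior {v f : V} (hv : v ∈ C) (hf : IsExtRay C f) (hef : e + f ∈ C) :
    ∃ W, ∀ s : ℝ, 0 ≤ s → F (v + s • f) = F v + s • W := by
  have hfe : IsChord C f e := IsChord.mk' X.dom hf.mem hf.notMem X.ext.mem X.ext.notMem one_pos
    (by rwa [one_smul, add_comm])
  obtain ⟨z, hz, hzF⟩ := X.flift_chord hfe
  have key : ∀ u ∈ C, ∃ (a : ℝ) (ν : ℝ → ℝ), Tendsto ν atTop (𝓝 1) ∧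
      ∀ s : ℝ, 0 ≤ s → F (u + s • f) = ν s • (a • F u + s • z) := by
    intro u hu
    have hc := X.dom.chord_of hu hf.mem hf.ne_zero hf.notMem
    have ht := X.dom.exitT_pos hu hf.mem hf.ne_zero
    set t := exitT C u f
    obtain ⟨w'', ν, tν, hν⟩ := X.asymp_factor hc hf hfe hz hzF
    refine ⟨(ν t)⁻¹, fun s => ν (t + s),
      tν.comp (tendsto_atTop_add_const_left _ t tendsto_id), fun s hs => ?_⟩
    have e1 : u = u - t • f + t • f := by module
    have e2 : u + s • f = u - t • f + (t + s) • f := by module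
    have e3 : F u = ν t • (w'' + t • z) := by
      conv_lhs => rw [e1]
      exact (hν t ht).2
    rw [e2, (hν _ (by linarith)).2, e3, smul_smul, inv_mul_cancel₀ (hν t ht).1.ne', one_smul]
    module
  obtain ⟨a, ν₀, t₀, h₀⟩ := key v hv
  have hve : v + (1 : ℝ) • e ∈ C :=
    X.dom.add_closure_left hv (X.dom.smul_closure zero_le_one X.ext.mem)
  obtain ⟨b, ν₁, t₁, h₁⟩ := key _ hve
  -- Compare the two expressions for `F (v + s • f + e)`.
  have hrel : ∀ s : ℝ, 0 ≤ s → (ν₀ s * a - ν₁ s * b) • F v + ((ν₀ s - ν₁ s) * s) • z +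
      (1 - ν₁ s * b) • e' = 0 := by
    intro s hs
    have hvs : v + s • f ∈ C := X.dom.add_closure_left hv (X.dom.smul_closure hs hf.mem)
    have h2 := h₁ s hs
    rw [add_right_comm, X.flift_add hvs zero_le_one, h₀ s hs, X.flift_add hv zero_le_one] at h2
    rw [← sub_eq_zero] at h2
    rw [← h2]; module
  refine ⟨z, ?_⟩
  by_cases hcase : ∀ s : ℝ, 0 ≤ s → ν₀ s * a - ν₁ s * b = 0
  · have hb : ∀ s : ℝ, 0 < s → ν₀ s = ν₁ s ∧ ν₁ s * b = 1 := by
      intro s hs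
      have h2 := hrel s hs.le
      rw [hcase s hs.le, zero_smul, zero_add] at h2
      obtain ⟨h3, h4⟩ := hz.indep X.cod h2
      refine ⟨?_, by linarith⟩
      rcases mul_eq_zero.1 h3 with h5 | h5
      · linarith
      · exact absurd h5 hs.ne'
    have hb1 : b = 1 := by
      have h2 := t₁.mul_const b
      rw [one_mul] at h2
      refine (tendsto_nhds_unique (h2.congr' ?_) tendsto_const_nhds)
      filter_upwards [eventually_gt_atTop 0] with s hs using (hb s hs).2
    intro s hs
    rcases hs.eq_or_lt with rfl | hs
    · simp
    · obtain ⟨h2, h3⟩ := hb s hs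
      rw [hb1, mul_one] at h3
      have h4 := hcase s hs.le
      rw [h2, h3, hb1] at h4
      have ha : a = 1 := by linarith
      rw [h₀ s hs.le, h2, h3, ha, one_smul, one_smul]
  · push Not at hcase
    obtain ⟨s₀, hs₀, hne⟩ := hcase
    -- Here `v` lies in the plane of `e` and `f`, on which the map is already known.
    obtain ⟨α, β, hX⟩ : ∃ α β : ℝ, F v = α • z + β • e' := by
      have h2 := hrel s₀ hs₀
      set d := ν₀ s₀ * a - ν₁ s₀ * b
      refine ⟨-(d⁻¹ * ((ν₀ s₀ - ν₁ s₀) * s₀)), -(d⁻¹ * (1 - ν₁ s₀ * b)), ?_⟩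
      have h3 : d⁻¹ • (d • F v + ((ν₀ s₀ - ν₁ s₀) * s₀) • z + (1 - ν₁ s₀ * b) • e') = 0 := by
        rw [h2, smul_zero]
      rw [smul_add, smul_add, smul_smul, inv_mul_cancel₀ hne, one_smul] at h3
      rw [← sub_eq_zero, ← h3]; module
    have hFv := X.flift_mem hv
    have hα : 0 < α := by
      by_contra hn
      have := X.cod.add_closure_left hFv (X.cod.smul_closure (neg_nonneg.2 (not_lt.1 hn)) hz.left)
      have e1 : F v + -α • z = β • e' := by rw [hX]; module
      exact X.cod.smul_boundary_notMem X.mem' X.notMem' _ (e1 ▸ this)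
    have hβ : 0 < β := by
      by_contra hn
      have := X.cod.add_closure_left hFv (X.cod.smul_closure (neg_nonneg.2 (not_lt.1 hn)) X.mem')
      have e1 : F v + -β • e' = α • z := by rw [hX]; module
      exact X.cod.smul_boundary_notMem hz.left hz.left_not _ (e1 ▸ this)
    have hplane : ∀ p : ℝ, 0 < p →
        p • f + β • e ∈ C ∧ F (p • f + β • e) = p • z + β • e' := by
      intro p hp
      have hm := hfe.mem (div_pos hβ hp)
      have e1 : p • f + β • e = p • (f + (β / p) • e) := by
        rw [smul_add, smul_smul, mul_div_cancel₀ _ hp.ne']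
      refine ⟨e1 ▸ X.dom.smul hp hm, ?_⟩
      rw [e1, X.flift_smul hm hp, hzF _ (div_pos hβ hp), smul_add, smul_smul,
        mul_div_cancel₀ _ hp.ne']
    have hveq : v = α • f + β • e :=
      X.flift_inj hv (hplane α hα).1 (by rw [hX, (hplane α hα).2])
    intro s hs
    have e1 : v + s • f = (α + s) • f + β • e := by rw [hveq]; module
    rw [e1, (hplane (α + s) (by linarith)).2, hX]
    module

lemma affine {v f : V} (hv : v ∈ C) (hf : IsExtRay C f) :
    ∃ W, ∀ s : ℝ, 0 ≤ s → F (v + s • f) = F v + s • W := by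
  by_cases hef : e + f ∈ C
  · exact X.affine_of_interior hv hf hef
  · exact X.affine_of_boundary hv hf hef

end FocusData
end HilbertCone

/-! ### Linearity of the lift -/

namespace HilbertCone
open Filter Topology

variable {V : Type*} [NormedAddCommGroup V] [NormedSpace ℝ V]

lemma PCone.mem_of_add_inv {C : Set V} {h : V →L[ℝ] ℝ} (_H : PCone C h) {a x : V}
    (hr : ∀ r : ℝ, 0 < r → a + r⁻¹ • x ∈ closure C) : a ∈ closure C := by
  have t : Tendsto (fun r : ℝ => a + r⁻¹ • x) atTop (𝓝 a) := by
    have := ((tendsto_inv_atTop_zero (𝕜 := ℝ)).smul_const x).const_add a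
    rwa [zero_smul, add_zero] at this
  exact isClosed_closure.mem_of_tendsto t ((eventually_gt_atTop 0).mono hr)

namespace FocusData

variable {C C' : Set V} {h : V →L[ℝ] ℝ} {T : V → V} {e e' : V} (X : FocusData C C' h T e e')
include X

local notation "F" => (flift C C' T e e' : V → V)

/-- If the cone has a basis of extreme rays, the homogeneous lift is the restriction of a linear
map. The slope of the lift along a basis vector is monotone for the cone order and homogeneous of
degree zero, hence constant on the vectors with positive coordinates; affinity along the basis
vectors then propagates the resulting linear formula to the whole cone. -/
theorem exists_linear {ι : Type*} [Fintype ι] (b : Module.Basis ι ℝ V)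
    (hb : ∀ i, IsExtRay C (b i)) : ∃ L : V →ₗ[ℝ] V, ∀ v ∈ C, F v = L v := by
  have hex : ∀ (i : ι) (v : V), ∃ W, v ∈ C → ∀ s : ℝ, 0 ≤ s → F (v + s • b i) = F v + s • W := by
    intro i v
    by_cases hv : v ∈ C
    · obtain ⟨W, hW⟩ := X.affine hv (hb i)
      exact ⟨W, fun _ => hW⟩
    · exact ⟨0, fun h => absurd h hv⟩
  choose W hW using hex
  have hadd : ∀ {v : V} (i : ι) {s : ℝ}, v ∈ C → 0 ≤ s → v + s • b i ∈ C := fun i _ hv hs =>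
    X.dom.add_closure_left hv (X.dom.smul_closure hs (hb i).mem)
  have Wmem : ∀ i, ∀ v ∈ C, W i v ∈ closure C' := by
    intro i v hv
    refine X.cod.mem_of_add_inv (x := F v) fun r hr => ?_
    have h1 := X.cod.smul (inv_pos.2 hr) (X.flift_mem (hadd i hv hr.le))
    rw [hW i v hv r hr.le, smul_add, smul_smul, inv_mul_cancel₀ hr.ne', one_smul, add_comm] at h1
    exact X.cod.sub_closure h1
  have Whom : ∀ i, ∀ v ∈ C, ∀ c : ℝ, 0 < c → W i (c • v) = W i v := by
    intro i v hv c hc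
    have h1 := hW i (c • v) (X.dom.smul hc hv) c hc.le
    have h2 := hW i v hv 1 zero_le_one
    rw [← smul_add, X.flift_smul hv hc, ← one_smul ℝ (b i),
      X.flift_smul (hadd i hv zero_le_one) hc, h2, one_smul, smul_add] at h1
    exact (smul_right_injective V hc.ne' (add_left_cancel h1)).symm
  -- `F` on the parallelogram `v, v + s • b i, v + r • b j` is computed in two ways; let `r → ∞`.
  have Wmono1 : ∀ i j, ∀ v ∈ C, ∀ s : ℝ, 0 ≤ s → W j (v + s • b i) - W j v ∈ closure C' := by
    intro i j v hv s hs
    refine X.cod.mem_of_add_inv (x := s • W i v) fun r hr => ?_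
    have h1 := hW j (v + s • b i) (hadd i hv hs) r hr.le
    have h2 := hW i (v + r • b j) (hadd j hv hr.le) s hs
    rw [add_right_comm, h2, hW i v hv s hs, hW j v hv r hr.le] at h1
    have h3 : W j (v + s • b i) - W j v + r⁻¹ • s • W i v =
        (r⁻¹ * s) • W i (v + r • b j) := by
      have h4 : r • (W j (v + s • b i) - W j v) + s • W i v = s • W i (v + r • b j) := by
        rw [← sub_eq_zero] at h1 ⊢
        rw [← neg_eq_zero, ← h1]; module
      rw [mul_smul, ← h4, smul_add, smul_smul r⁻¹ r, inv_mul_cancel₀ hr.ne', one_smul]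
    rw [h3]
    exact X.cod.smul_closure (by positivity) (Wmem i _ (hadd j hv hr.le))
  have hsum_repr : ∀ p : V, p = ∑ i, b.repr p i • b i := fun p => (b.sum_repr p).symm
  have memadd : ∀ (A : Finset ι) (c : ι → ℝ), (∀ i, 0 ≤ c i) → ∀ v ∈ C,
      v + ∑ i ∈ A, c i • b i ∈ C := fun A c hc v hv => by
    induction A using Finset.induction_on with
    | empty => simpa using hv
    | insert i A hi ih =>
      rw [Finset.sum_insert hi, add_comm (c i • b i), ← add_assoc]
      exact hadd i ih (hc i)
  have Wmono : ∀ j, ∀ v ∈ C, ∀ p : V, (∀ i, 0 ≤ b.repr p i) →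
      W j (v + p) - W j v ∈ closure C' := by
    intro j v hv p hp
    have : ∀ A : Finset ι, W j (v + ∑ i ∈ A, b.repr p i • b i) - W j v ∈ closure C' := fun A => by
      induction A using Finset.induction_on with
      | empty => simpa using X.cod.zero_mem
      | insert i A hi ih =>
        rw [Finset.sum_insert hi, add_comm (b.repr p i • b i), ← add_assoc]
        have := X.cod.add_closure (Wmono1 i j _ (memadd A _ hp v hv) _ (hp i)) ih
        rwa [sub_add_sub_cancel] at this
    have h1 := this Finset.univ
    rwa [← hsum_repr] at h1
  -- The vectors of the cone with positive coordinates.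
  let S : Set V := {v | v ∈ C ∧ ∀ i, 0 < b.repr v i}
  have large : ∀ (u v : V), (∀ i, 0 < b.repr v i) → ∃ c : ℝ, 0 < c ∧
      ∀ i, b.repr u i < c * b.repr v i := by
    intro u v hv
    have h1 : ∀ᶠ c : ℝ in atTop, ∀ i, b.repr u i < c * b.repr v i := by
      rw [eventually_all]
      intro i
      exact (tendsto_id.atTop_mul_const (hv i)).eventually_gt_atTop _
    obtain ⟨c, h2, h3⟩ := (h1.and (eventually_gt_atTop 0)).exists
    exact ⟨c, h3, h2⟩
  have Wle : ∀ j, ∀ u ∈ S, ∀ v ∈ S, W j v - W j u ∈ closure C' := by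
    intro j u hu v hv
    obtain ⟨c, hc, hlt⟩ := large u v hv.2
    have := Wmono j u hu.1 (c • v - u) (fun i => by
      simp only [map_sub, map_smul, Finsupp.coe_sub, Finsupp.coe_smul, Pi.sub_apply,
        Pi.smul_apply, smul_eq_mul]
      linarith [hlt i])
    rwa [add_sub_cancel, Whom j v hv.1 c hc] at this
  have Wconst : ∀ j, ∀ u ∈ S, ∀ v ∈ S, W j v = W j u := by
    intro j u hu v hv
    have h1 := Wle j u hu v hv
    have h2 := X.cod.nonneg (Wle j v hv u hu)
    refine sub_eq_zero.1 (X.cod.eq_zero h1 ?_)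
    simp only [map_sub] at h2 ⊢
    linarith
  obtain ⟨v₀, hv₀⟩ : S.Nonempty := by
    obtain ⟨v, hv⟩ := X.dom.nonempty
    have hone : ∀ i, b.repr (∑ i, b i) i = 1 := by
      intro i
      simp [Finsupp.single_apply]
    obtain ⟨c, hc, hlt⟩ := large (-v) (∑ i, b i) (fun i => by rw [hone]; exact one_pos)
    refine ⟨v + ∑ i, c • b i, memadd _ (fun _ => c) (fun _ => hc.le) v hv, fun i => ?_⟩
    have := hlt i
    rw [hone] at this
    rw [← Finset.smul_sum]
    simp only [map_add, map_smul, map_neg, Finsupp.coe_add, Finsupp.coe_smul, Finsupp.coe_neg,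
      Pi.add_apply, Pi.smul_apply, Pi.neg_apply, smul_eq_mul] at this ⊢
    rw [hone]
    linarith
  let L : V →ₗ[ℝ] V := b.constr ℝ fun j => W j v₀
  have hL : ∀ j, L (b j) = W j v₀ := fun j => b.constr_basis ℝ _ j
  have hS : ∀ v ∈ S, F v = L v := by
    intro v hv
    have h1 : ∀ A : Finset ι, v + ∑ i ∈ A, b.repr v i • b i ∈ S ∧
        F (v + ∑ i ∈ A, b.repr v i • b i) = F v + L (∑ i ∈ A, b.repr v i • b i) := fun A => by
      induction A using Finset.induction_on with
      | empty => simpa using hv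
      | insert i A hi ih =>
        rw [Finset.sum_insert hi, add_comm (b.repr v i • b i), ← add_assoc]
        have hm := hadd i ih.1.1 (hv.2 i).le
        refine ⟨⟨hm, fun j => ?_⟩, ?_⟩
        · have h2 := ih.1.2 j
          have h3 := (hv.2 i).le
          rw [map_add, map_smul, Finsupp.add_apply, Finsupp.smul_apply, b.repr_self,
            Finsupp.single_apply, smul_eq_mul]
          split_ifs
          · linarith
          · linarith
        · rw [hW i _ ih.1.1 _ (hv.2 i).le, ih.2, Wconst i v₀ hv₀ _ ih.1, ← hL i, map_add, map_smul,
            add_assoc]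
    have h2 := (h1 Finset.univ).2
    rw [← hsum_repr, ← two_smul ℝ v, X.flift_smul hv.1 two_pos, two_smul] at h2
    exact add_left_cancel h2
  refine ⟨L, fun v hv => ?_⟩
  -- `A` contains the indices of the possibly nonpositive coordinates.
  have hind : ∀ A : Finset ι, ∀ v ∈ C, (∀ i, i ∉ A → 0 < b.repr v i) → F v = L v := fun A => by
    induction A using Finset.induction_on with
    | empty => exact fun v hv hp => hS v ⟨hv, fun i => hp i (Finset.notMem_empty i)⟩
    | insert i A hi ih =>
      intro v hv hp
      have h1 : ∀ r : ℝ, |b.repr v i| + 1 ≤ r → F v + r • W i v = L v + r • L (b i) := by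
        intro r hr
        have hr0 : 0 ≤ r := by have := abs_nonneg (b.repr v i); linarith
        rw [← hW i v hv r hr0, ih _ (hadd i hv hr0), map_add, map_smul]
        intro j hj
        rw [map_add, map_smul, Finsupp.add_apply, Finsupp.smul_apply, b.repr_self,
          Finsupp.single_apply, smul_eq_mul]
        by_cases hij : i = j
        · subst hij
          rw [if_pos rfl]
          linarith [neg_abs_le (b.repr v i)]
        · rw [if_neg hij, mul_zero, add_zero]
          refine hp j fun hm => ?_
          rcases Finset.mem_insert.1 hm with h | h
          · exact hij h.symm
          · exact hj h
      generalize |b.repr v i| + 1 = r at h1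
      have h2 := h1 r le_rfl
      have h3 := h1 (r + 1) (by linarith)
      have h4 : W i v = L (b i) := by
        rw [add_smul, add_smul, ← add_assoc, ← add_assoc, h2, one_smul, one_smul] at h3
        exact add_left_cancel h3
      rw [h4] at h2
      exact add_right_cancel h2
  exact hind Finset.univ v hv fun i hi => absurd (Finset.mem_univ i) hi

/-- Injectivity of the linear map of `exists_linear` follows from that of the lift, as the cone is
open. -/
theorem exists_equiv {ι : Type*} [Fintype ι] (b : Module.Basis ι ℝ V)
    (hb : ∀ i, IsExtRay C (b i)) :
    ∃ L : V ≃ₗ[ℝ] V, ∀ v ∈ C, ∃ c : ℝ, 0 < c ∧ T v = c • L v := by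
  obtain ⟨L, hL⟩ := X.exists_linear b hb
  have : Module.Finite ℝ V := Module.Finite.of_basis b
  have hinj : Function.Injective L := by
    rw [← LinearMap.ker_eq_bot, LinearMap.ker_eq_bot']
    intro k hk
    obtain ⟨v, hv⟩ := X.dom.nonempty
    obtain ⟨s, hs, hm⟩ := PCone.exists_gt X.dom.isOpen (v := v) (f := k) (t := 0) (by simpa using hv)
    have := X.flift_inj hm hv (by rw [hL _ hm, hL _ hv, map_sub, map_smul, hk, smul_zero, sub_zero])
    rw [sub_eq_self, smul_eq_zero] at this
    exact this.resolve_left hs.ne'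
  refine ⟨LinearEquiv.ofInjectiveEndo L hinj, fun v hv => ?_⟩
  obtain ⟨c, hc, ec⟩ := X.flift_prop hv
  refine ⟨c⁻¹, inv_pos.2 hc, ?_⟩
  rw [LinearEquiv.coe_ofInjectiveEndo, ← hL v hv, ec, smul_smul, inv_mul_cancel₀ hc.ne', one_smul]

end FocusData
end HilbertCone

/-! ### The cone over a convex domain -/

namespace HilbertCone
open Filter Topology

section coneOver

variable {n : ℕ} {Ω Ω' : Set (Euc n)}

/-- The height functional on the linear space containing the affine chart `{height = 1}`. -/
abbrev height (n : ℕ) : (Euc n × ℝ) →L[ℝ] ℝ := ContinuousLinearMap.snd ℝ (Euc n) ℝ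

/-- The central projection to the affine chart `{height = 1}`. -/
def proj (v : Euc n × ℝ) : Euc n := v.2⁻¹ • v.1

/-- The open cone spanned by `Ω × {1}`. -/
def coneOver (Ω : Set (Euc n)) : Set (Euc n × ℝ) := {v | 0 < v.2 ∧ proj v ∈ Ω}

lemma proj_one (x : Euc n) : proj (x, (1 : ℝ)) = x := by simp [proj]

lemma proj_smul {c : ℝ} (hc : c ≠ 0) (v : Euc n × ℝ) : proj (c • v) = proj v := by
  simp only [proj, Prod.smul_fst, Prod.smul_snd, smul_eq_mul, smul_smul]
  congr 1
  rw [mul_inv, mul_right_comm, inv_mul_cancel₀ hc, one_mul]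

lemma smul_proj {v : Euc n × ℝ} (hv : v.2 ≠ 0) : v.2 • ((proj v, 1) : Euc n × ℝ) = v := by
  ext1
  · simp [proj, smul_smul, mul_inv_cancel₀ hv]
  · simp

lemma mem_coneOver_one {x : Euc n} : ((x, 1) : Euc n × ℝ) ∈ coneOver Ω ↔ x ∈ Ω := by
  simp [coneOver, proj_one]

lemma continuousAt_proj {v : Euc n × ℝ} (hv : v.2 ≠ 0) : ContinuousAt proj v :=
  (continuousAt_snd.inv₀ hv).smul continuousAt_fst

lemma pcone (hne : Ω.Nonempty) (hop : IsOpen Ω) (hbd : Bornology.IsBounded Ω)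
    (hcv : Convex ℝ Ω) : PCone (coneOver Ω) (height n) where
  isOpen := by
    have : ContinuousOn (proj (n := n)) {v | 0 < v.2} := fun v hv =>
      (continuousAt_proj (ne_of_gt hv)).continuousWithinAt
    exact this.isOpen_inter_preimage (isOpen_lt continuous_const continuous_snd) hop
  nonempty := by
    obtain ⟨x, hx⟩ := hne
    exact ⟨(x, 1), mem_coneOver_one.2 hx⟩
  add := by
    rintro u v ⟨hu, hu'⟩ ⟨hv, hv'⟩
    have hs : 0 < u.2 + v.2 := add_pos hu hv
    refine ⟨hs, ?_⟩
    have := hcv hu' hv' (div_pos hu hs).le (div_pos hv hs).le (by rw [← add_div, div_self hs.ne'])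
    convert this using 1
    simp only [proj, Prod.fst_add, Prod.snd_add, smul_smul, smul_add]
    congr 2 <;> field_simp
  smul := by
    rintro c u hc ⟨hu, hu'⟩
    exact ⟨mul_pos hc hu, by rwa [proj_smul hc.ne']⟩
  pos := fun hu => hu.1
  bound := by
    obtain ⟨M, hM⟩ := hbd.exists_norm_le
    refine ⟨max M 1, fun u hu => ?_⟩
    have h1 : ‖u.1‖ ≤ M * u.2 := by
      have h2 := hM _ hu.2
      rw [proj, norm_smul, norm_inv, Real.norm_eq_abs, abs_of_pos hu.1,
        inv_mul_le_iff₀ hu.1] at h2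
      linarith
    have h0 := hu.1
    rw [Prod.norm_def]
    refine max_le (h1.trans (mul_le_mul_of_nonneg_right (le_max_left _ _) h0.le)) ?_
    rw [Real.norm_eq_abs, abs_of_pos h0]
    calc u.2 = 1 * u.2 := (one_mul _).symm
      _ ≤ max M 1 * u.2 := mul_le_mul_of_nonneg_right (le_max_right _ _) h0.le

lemma lift_mem_closure {x : Euc n} (hx : x ∈ closure Ω) :
    ((x, 1) : Euc n × ℝ) ∈ closure (coneOver Ω) :=
  map_mem_closure (f := fun x : Euc n => ((x, 1) : Euc n × ℝ)) (by fun_prop) hx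
    fun _ h => mem_coneOver_one.2 h

lemma proj_mem_closure {v : Euc n × ℝ} (hv : v ∈ closure (coneOver Ω)) (h0 : 0 < v.2) :
    proj v ∈ closure Ω :=
  (continuousAt_proj h0.ne').continuousWithinAt.mem_closure hv fun _ h => h.2

/-! #### The Hilbert metric in terms of the cone -/

/-- The exit parameter of the cone computes the ratio of distances to a boundary point. -/
lemma exitT_eq_ratio (H : PCone (coneOver Ω) (height n)) (hop : IsOpen Ω) (hcv : Convex ℝ Ω)
    {x y β : Euc n} (hx : x ∈ Ω) (hy : y ∈ Ω) (hβ : β ∈ frontier Ω)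
    (hcol : Collinear ℝ ({β, x, y} : Set (Euc n))) (hlt : dist β y < dist β x) :
    exitT (coneOver Ω) (y, 1) (x, 1) = dist β y / dist β x := by
  rw [hop.frontier_eq] at hβ
  have hxy : x ≠ y := by rintro rfl; exact lt_irrefl _ hlt
  obtain ⟨ρ, hρ⟩ : ∃ ρ : ℝ, β = x + ρ • (y - x) := by
    obtain ⟨d, hd⟩ := (collinear_iff_of_mem (p₀ := x) (by simp)).1 hcol
    obtain ⟨r, hr⟩ := hd β (by simp)
    obtain ⟨q, hq⟩ := hd y (by simp)
    have hq0 : q ≠ 0 := by rintro rfl; exact hxy (by simp [hq])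
    refine ⟨r / q, ?_⟩
    rw [hr, hq]
    simp only [vadd_eq_add, add_sub_cancel_right, smul_smul]
    rw [div_mul_cancel₀ _ hq0, add_comm]
  have hn : 0 < ‖y - x‖ := norm_pos_iff.2 (sub_ne_zero.2 hxy.symm)
  have d1 : dist β x = |ρ| * ‖y - x‖ := by
    rw [hρ, dist_eq_norm, add_sub_cancel_left, norm_smul, Real.norm_eq_abs]
  have d2 : dist β y = |ρ - 1| * ‖y - x‖ := by
    have : x + ρ • (y - x) - y = (ρ - 1) • (y - x) := by module
    rw [hρ, dist_eq_norm, this, norm_smul, Real.norm_eq_abs]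
  have hlt' : |ρ - 1| < |ρ| := by
    rw [d1, d2] at hlt
    exact lt_of_mul_lt_mul_right hlt hn.le
  have hhalf : 0 < ρ := by
    by_contra hneg
    rw [abs_of_nonpos (not_lt.1 hneg), abs_of_nonpos (by linarith)] at hlt'
    linarith
  have h1 : 1 < ρ := by
    by_contra hle
    refine hβ.2 (hρ ▸ ?_)
    have := hcv hx hy (sub_nonneg.2 (not_lt.1 hle)) hhalf.le (by ring)
    convert this using 1; module
  have hdiv : dist β y / dist β x = (ρ - 1) / ρ := by
    rw [d1, d2, abs_of_pos hhalf, abs_of_pos (sub_pos.2 h1), mul_div_mul_right _ _ hn.ne']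
  have ee : ((y, 1) : Euc n × ℝ) - ((ρ - 1) / ρ) • (x, 1) = ρ⁻¹ • (β, 1) := by
    ext1
    · simp only [Prod.fst_sub, Prod.smul_fst, hρ]
      have : (ρ - 1) / ρ = 1 - ρ⁻¹ := by field_simp
      have h2 : ρ⁻¹ • (x + ρ • (y - x)) = ρ⁻¹ • x + (y - x) := by
        rw [smul_add, smul_smul, inv_mul_cancel₀ hhalf.ne', one_smul]
      rw [this, h2]; module
    · simp only [Prod.snd_sub, Prod.smul_snd, smul_eq_mul]
      field_simp; ring
  rw [hdiv]
  have hx1 := (mem_coneOver_one (Ω := Ω)).2 hx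
  refine H.exitT_eq (mem_coneOver_one.2 hy) (H.sub_closure hx1) (H.ne_zero hx1) ?_ ?_ <;> rw [ee]
  · exact H.smul_closure (inv_pos.2 hhalf).le (lift_mem_closure hβ.1)
  · exact H.smul_notMem (inv_pos.2 hhalf).le (mt mem_coneOver_one.1 hβ.2)

lemma exists_end (H : PCone (coneOver Ω) (height n)) (hop : IsOpen Ω) {x y : Euc n}
    (hx : x ∈ Ω) (hy : y ∈ Ω) (hxy : x ≠ y) :
    ∃ β ∈ frontier Ω, Collinear ℝ ({β, x, y} : Set (Euc n)) ∧ dist β y < dist β x := by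
  have hx1 := (mem_coneOver_one (Ω := Ω)).2 hx
  have hy1 := (mem_coneOver_one (Ω := Ω)).2 hy
  have h1 := H.exitT_mem hy1 (H.sub_closure hx1) (H.ne_zero hx1)
  have h2 := H.exitT_notMem (v := (y, 1)) (H.sub_closure hx1) (H.ne_zero hx1)
  have h3 := H.exitT_pos hy1 (H.sub_closure hx1) (H.ne_zero hx1)
  set t := exitT (coneOver Ω) (y, 1) (x, 1)
  set w := ((y, 1) : Euc n × ℝ) - t • (x, 1) with hw
  have hw2 : w.2 = 1 - t := by simp [hw]
  have hw1 : w.1 = y - t • x := by simp [hw]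
  have ht : 0 < 1 - t := by
    rw [← hw2]
    refine lt_of_le_of_ne (H.nonneg h1) fun h0 => ?_
    have hz := H.eq_zero h1 h0.ge
    have ht1 : t = 1 := by rw [hw2] at h0; linarith
    have : w.1 = 0 := by rw [hz]; rfl
    rw [hw1, ht1, one_smul, sub_eq_zero] at this
    exact hxy this.symm
  have hp := proj_mem_closure h1 (hw2 ▸ ht)
  have hp' : proj w ∉ Ω := fun hm => h2 ⟨hw2 ▸ ht, hm⟩
  have hβ : proj w = x + (1 - t)⁻¹ • (y - x) := by
    rw [proj, hw2, hw1]
    have : y - t • x = (1 - t) • x + (y - x) := by module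
    rw [this, smul_add, smul_smul, inv_mul_cancel₀ ht.ne', one_smul]
  have hn : 0 < ‖y - x‖ := norm_pos_iff.2 (sub_ne_zero.2 hxy.symm)
  refine ⟨proj w, by rw [hop.frontier_eq]; exact ⟨hp, hp'⟩, ?_, ?_⟩
  · refine (collinear_iff_of_mem (p₀ := x) (by simp)).2 ⟨y - x, fun p hmem => ?_⟩
    simp only [mem_insert_iff, mem_singleton_iff] at hmem
    rcases hmem with rfl | rfl | rfl
    · exact ⟨(1 - t)⁻¹, by rw [hβ, vadd_eq_add, add_comm]⟩
    · exact ⟨0, by simp⟩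
    · exact ⟨1, by simp⟩
  · have e1 : x + (1 - t)⁻¹ • (y - x) - y = ((1 - t)⁻¹ - 1) • (y - x) := by module
    have hinv : 1 < (1 - t)⁻¹ := (one_lt_inv₀ ht).2 (by linarith)
    rw [hβ, dist_eq_norm, dist_eq_norm, e1, add_sub_cancel_left, norm_smul, norm_smul,
      Real.norm_eq_abs, Real.norm_eq_abs, abs_of_pos (by linarith), abs_of_pos (by linarith)]
    exact mul_lt_mul_of_pos_right (by linarith) hn

/-- When `x = y` no Hilbert pair exists and both sides vanish. -/
lemma hilbertDist_eq (H : PCone (coneOver Ω) (height n)) (hop : IsOpen Ω) (hcv : Convex ℝ Ω)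
    {x y : Euc n} (hx : x ∈ Ω) (hy : y ∈ Ω) :
    hilbertDist Ω x y = -Real.log (D (coneOver Ω) (x, 1) (y, 1)) := by
  unfold hilbertDist
  split_ifs with hex
  · obtain ⟨h1, h2, h3, h4, h5, h6⟩ := hex.choose_spec
    set α := hex.choose.1
    set β := hex.choose.2
    have e1 := exitT_eq_ratio H hop hcv hx hy h2 h4 h6
    have e2 := exitT_eq_ratio H hop hcv hy hx h1 (by rwa [pair_comm y x]) h5
    rw [D, e1, e2, ← Real.log_inv, mul_inv, inv_div, inv_div]
  · have hxy : x = y := by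
      by_contra hxy
      obtain ⟨β, h1, h2, h3⟩ := exists_end H hop hx hy hxy
      obtain ⟨α, h4, h5, h6⟩ := exists_end H hop hy hx (Ne.symm hxy)
      exact hex ⟨(α, β), h4, h1, by rwa [pair_comm x y], h2, h6, h3⟩
    subst hxy
    rw [H.D_self (mem_coneOver_one.2 hx), Real.log_one, neg_zero]

/-- The homogeneous map induced by `τ` on the cones. -/
def coneMap (τ : Euc n → Euc n) (v : Euc n × ℝ) : Euc n × ℝ := (τ (proj v), 1)

lemma isIso_coneMap (H : PCone (coneOver Ω) (height n)) (H' : PCone (coneOver Ω') (height n))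
    (hop : IsOpen Ω) (hcv : Convex ℝ Ω) (hop' : IsOpen Ω') (hcv' : Convex ℝ Ω')
    {τ : Euc n → Euc n} (hτ : IsHilbertIsometry Ω Ω' τ) :
    IsIso (coneOver Ω) (coneOver Ω') (coneMap τ) where
  maps := fun hv => mem_coneOver_one.2 (hτ.1 hv.2)
  surj := by
    intro w hw
    obtain ⟨x, hx, ex⟩ := hτ.2.1 hw.2
    refine ⟨(x, 1), mem_coneOver_one.2 hx, w.2⁻¹, inv_pos.2 hw.1, ?_⟩
    rw [coneMap, proj_one, ex, eq_inv_smul_iff₀ hw.1.ne', smul_proj hw.1.ne']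
  dist := by
    intro u v hu hv
    have hu1 := (mem_coneOver_one (Ω := Ω)).2 hu.2
    have hv1 := (mem_coneOver_one (Ω := Ω)).2 hv.2
    have hu2 := (mem_coneOver_one (Ω := Ω')).2 (hτ.1 hu.2)
    have hv2 := (mem_coneOver_one (Ω := Ω')).2 (hτ.1 hv.2)
    have h1 := hτ.2.2 _ hu.2 _ hv.2
    rw [hilbertDist_eq H hop hcv hu.2 hv.2, hilbertDist_eq H' hop' hcv' (hτ.1 hu.2) (hτ.1 hv.2),
      neg_inj] at h1
    have h2 := Real.log_injOn_pos (H'.D_pos hu2 hv2) (H.D_pos hu1 hv1) h1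
    rw [coneMap, coneMap, h2, ← H.D_smul_left hu1 hv1 hu.1,
      ← H.D_smul_right (H.smul hu.1 hu1) hv1 hv.1, smul_proj hu.1.ne', smul_proj hv.1.ne']

end coneOver
end HilbertCone

/-! ### Focusing points and projective maps -/

namespace HilbertCone
open Filter Topology

section application

variable {n : ℕ} {Ω Ω' : Set (Euc n)}

lemma extreme_notMem [Nontrivial (Euc n)] (hop : IsOpen Ω) {e : Euc n}
    (he : e ∈ Set.extremePoints ℝ (closure Ω)) : e ∉ Ω := by
  intro hm
  obtain ⟨d, hd⟩ := exists_ne (0 : Euc n)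
  have hcont : Continuous fun s : ℝ => (e + s • d, e - s • d) := by fun_prop
  have hev : ∀ᶠ s in 𝓝 (0 : ℝ), (e + s • d, e - s • d) ∈ Ω ×ˢ Ω :=
    hcont.continuousAt.eventually ((hop.prod hop).mem_nhds (by simpa using hm))
  obtain ⟨s, hs, hs0⟩ :=
    ((hev.filter_mono nhdsWithin_le_nhds).and (self_mem_nhdsWithin (s := Ioi (0 : ℝ)))).exists
  have := he.2 (subset_closure hs.1) (subset_closure hs.2)
    ⟨1 / 2, 1 / 2, by norm_num, by norm_num, by norm_num, by module⟩
  rw [add_eq_left, smul_eq_zero] at this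
  exact this.elim hs0.ne' hd

lemma isExtRay [Nontrivial (Euc n)] (H : PCone (coneOver Ω) (height n)) (hop : IsOpen Ω)
    {e : Euc n} (he : e ∈ Set.extremePoints ℝ (closure Ω)) :
    IsExtRay (coneOver Ω) ((e, 1) : Euc n × ℝ) where
  mem := lift_mem_closure he.1
  notMem := mt mem_coneOver_one.1 (extreme_notMem hop he)
  ne_zero := fun h0 => one_ne_zero (α := ℝ) (congrArg Prod.snd h0)
  extreme := by
    intro u v c hc hu hv huv
    rcases (H.nonneg hu).eq_or_lt with hu0 | hu0
    · exact ⟨0, le_rfl, by rw [zero_smul]; exact H.eq_zero hu hu0.ge⟩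
    rcases (H.nonneg hv).eq_or_lt with hv0 | hv0
    · refine ⟨c, hc.le, ?_⟩
      rwa [H.eq_zero hv hv0.ge, add_zero] at huv
    change 0 < u.2 at hu0
    change 0 < v.2 at hv0
    have h1 : u.1 + v.1 = c • e := congrArg Prod.fst huv
    have h2 : u.2 + v.2 = c := by simpa using congrArg Prod.snd huv
    have h3 : proj u = e := by
      refine he.2 (proj_mem_closure hu hu0) (proj_mem_closure hv hv0)
        ⟨u.2 / c, v.2 / c, div_pos hu0 hc, div_pos hv0 hc, ?_, ?_⟩
      · rw [← add_div, h2, div_self hc.ne']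
      · have e1 : (u.2 / c) • proj u = c⁻¹ • u.1 := by
          rw [proj, smul_smul]; congr 1; field_simp
        have e2 : (v.2 / c) • proj v = c⁻¹ • v.1 := by
          rw [proj, smul_smul]; congr 1; field_simp
        rw [e1, e2, ← smul_add, h1, smul_smul, inv_mul_cancel₀ hc.ne', one_smul]
    exact ⟨u.2, hu0.le, by rw [← h3, smul_proj hu0.ne']⟩

/-- By the Krein–Milman theorem the lifts of the extreme points span the ambient space. -/
lemma exists_basis [Nontrivial (Euc n)] (H : PCone (coneOver Ω) (height n)) (hop : IsOpen Ω)
    (hbd : Bornology.IsBounded Ω) (hcv : Convex ℝ Ω) :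
    ∃ (ι : Type) (_ : Fintype ι) (b : Module.Basis ι ℝ (Euc n × ℝ)),
      ∀ i, IsExtRay (coneOver Ω) (b i) := by
  let s : Set (Euc n × ℝ) := (fun x => (x, 1)) '' Set.extremePoints ℝ (closure Ω)
  let M := Submodule.span ℝ s
  have hMcl : IsClosed (M : Set (Euc n × ℝ)) := M.closed_of_finiteDimensional
  have hsub : closure Ω ⊆ {x | ((x, 1) : Euc n × ℝ) ∈ M} := by
    rw [← closure_convexHull_extremePoints hbd.isCompact_closure hcv.closure]
    refine closure_minimal (convexHull_min ?_ ?_) (hMcl.preimage (by fun_prop))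
    · exact fun x hx => Submodule.subset_span ⟨x, hx, rfl⟩
    · intro x hx y hy a c ha hc hac
      have := M.add_mem (M.smul_mem a hx) (M.smul_mem c hy)
      simpa [hac] using this
  have hCM : coneOver Ω ⊆ M := by
    intro v hv
    have := M.smul_mem v.2 (hsub (subset_closure hv.2))
    rwa [smul_proj hv.1.ne'] at this
  have htop : M = ⊤ := by
    refine Submodule.eq_top_of_nonempty_interior' M ?_
    obtain ⟨v, hv⟩ := H.nonempty
    exact ⟨v, interior_maximal hCM H.isOpen hv⟩
  let b := Module.Basis.ofSpan htop.ge
  refine ⟨_, FiniteDimensional.fintypeBasisIndex b, b, fun i => ?_⟩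
  obtain ⟨x, hx, ex⟩ := Module.Basis.ofSpan_subset htop.ge (mem_range_self i)
  rw [← ex]
  exact isExtRay H hop hx

/-- A chord of the cone towards `(e, 1)` gives a ray of `Ω` towards `e`; if its image is a chord
towards `f'`, the image of the ray accumulates at the projection of `f'`. -/
lemma exists_ray (H : PCone (coneOver Ω) (height n)) (H' : PCone (coneOver Ω') (height n))
    (hop : IsOpen Ω) (hop' : IsOpen Ω') {τ : Euc n → Euc n} {e : Euc n} (he : e ∈ closure Ω)
    (hen : e ∉ Ω) {w w' f' : Euc n × ℝ} (hc : IsChord (coneOver Ω) w (e, 1))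
    (hc' : IsChord (coneOver Ω') w' f')
    (hl : ∀ s : ℝ, 0 < s →
      ∃ c : ℝ, 0 < c ∧ coneMap τ (w + s • (e, 1)) = c • (w' + s • f')) :
    ∃ r, IsRayIn Ω r ∧ IsBdryLimit Ω r e ∧ IsBdryLimit Ω' (τ '' r) (proj f') := by
  have hp := (hc.mem one_pos).2
  have hw2 : 0 ≤ w.2 := H.nonneg hc.left
  have hf2 : 0 < f'.2 := H'.pos_of_ne hc'.right hc'.right_ne_zero
  have hx : ∀ s : ℝ, proj (w + s • ((e, 1) : Euc n × ℝ)) = (w.2 + s)⁻¹ • (w.1 + s • e) := by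
    intro s; simp [proj]
  have tinv : Tendsto (fun r : ℝ => r⁻¹) atTop (𝓝 0) := tendsto_inv_atTop_zero
  -- The central projection of `a + s • b` tends to that of `b` as `s → ∞`.
  have tproj : ∀ a b : Euc n × ℝ, b.2 ≠ 0 →
      Tendsto (fun s : ℝ => proj (a + s • b)) atTop (𝓝 (proj b)) := by
    intro a b hb
    have t1 : Tendsto (fun s : ℝ => s⁻¹ • a + b) atTop (𝓝 b) := by
      have := (tinv.smul_const a).add_const b
      rwa [zero_smul, zero_add] at this
    refine ((continuousAt_proj hb).tendsto.comp t1).congr' ?_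
    filter_upwards [eventually_gt_atTop 0] with s hs
    have : a + s • b = s • (s⁻¹ • a + b) := by
      rw [smul_add, smul_smul, mul_inv_cancel₀ hs.ne', one_smul]
    rw [this, proj_smul hs.ne']
    rfl
  let x : ℝ → Euc n := fun s => proj (w + s • ((e, 1) : Euc n × ℝ))
  let r : Set (Euc n) := {y | ∃ t : ℝ, 0 ≤ t ∧ y = x 1 + t • (e - x 1)} ∩ Ω
  have hxr : ∀ s : ℝ, 1 ≤ s → x s ∈ r := by
    intro s hs
    have hs0 : 0 < w.2 + s := by linarith
    have h10 : 0 < w.2 + 1 := by linarith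
    refine ⟨⟨(s - 1) / (w.2 + s), div_nonneg (by linarith) hs0.le, ?_⟩,
      (hc.mem (by linarith)).2⟩
    have e1 : w.1 = (w.2 + 1) • x 1 - e := by
      simp only [x]
      rw [hx, smul_smul, mul_inv_cancel₀ h10.ne', one_smul, one_smul, add_sub_cancel_right]
    have e2 : x s = (w.2 + s)⁻¹ • (w.1 + s • e) := hx s
    rw [e2, e1, inv_smul_eq_iff₀ hs0.ne', smul_add, smul_smul, mul_div_cancel₀ _ hs0.ne']
    module
  have tx : Tendsto x atTop (𝓝 e) := by
    have := tproj w (e, 1) one_ne_zero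
    rwa [proj_one] at this
  have tτ : Tendsto (fun s => τ (x s)) atTop (𝓝 (proj f')) := by
    refine (tproj w' f' hf2.ne').congr' ?_
    filter_upwards [eventually_gt_atTop 0] with s hs
    obtain ⟨c, hcp, ec⟩ := hl s hs
    rw [← proj_smul hcp.ne', ← ec, coneMap, proj_one]
  refine ⟨r, ⟨x 1, hp, e - x 1, ?_, rfl⟩, ⟨?_, ?_⟩, ?_, ?_⟩
  · intro h0
    exact hen (sub_eq_zero.1 h0 ▸ hp)
  · rw [hop.frontier_eq]; exact ⟨he, hen⟩
  · exact mem_closure_of_tendsto tx ((eventually_ge_atTop 1).mono hxr)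
  · rw [hop'.frontier_eq]
    exact ⟨proj_mem_closure hc'.right hf2, fun hm => hc'.right_not ⟨hf2, hm⟩⟩
  · exact mem_closure_of_tendsto tτ
      ((eventually_ge_atTop 1).mono fun s hs => mem_image_of_mem τ (hxr s hs))

lemma exists_focusData [Nontrivial (Euc n)] (H : PCone (coneOver Ω) (height n))
    (H' : PCone (coneOver Ω') (height n)) (hop : IsOpen Ω) (hcv : Convex ℝ Ω)
    (hop' : IsOpen Ω') (hcv' : Convex ℝ Ω') {τ : Euc n → Euc n}
    (hτ : IsHilbertIsometry Ω Ω' τ) {e : Euc n} (he : IsFocusingPoint Ω Ω' τ e) :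
    ∃ e', FocusData (coneOver Ω) (coneOver Ω') (height n) (coneMap τ) (e, 1) e' := by
  have hiso := isIso_coneMap H H' hop hcv hop' hcv' hτ
  have hext := isExtRay H hop he.1
  have hen := extreme_notMem hop he.1
  obtain ⟨v, hv⟩ := H.nonempty
  have hc₀ := H.chord_of hv hext.mem hext.ne_zero hext.notMem
  obtain ⟨w₀', e', hc₀', hl₀⟩ := hiso.line H H' hc₀ hext
  obtain ⟨r₀, hr₀, hb₀, hb₀'⟩ := exists_ray H H' hop hop' he.1.1 hen hc₀ hc₀' hl₀
  refine ⟨e', H, H', hiso, hc₀'.right, hc₀'.right_not, hc₀'.right_ne_zero, ?_, hext⟩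
  intro w w' f' hc hc' hl
  obtain ⟨r, hr, hb, hb'⟩ := exists_ray H H' hop hop' he.1.1 hen hc hc' hl
  have heq := he.2 r r₀ hr hr₀ hb hb₀ _ _ hb' hb₀'
  have hf2 : 0 < f'.2 := H'.pos_of_ne hc'.right hc'.right_ne_zero
  have he2 : 0 < e'.2 := H'.pos_of_ne hc₀'.right hc₀'.right_ne_zero
  refine ⟨f'.2 / e'.2, div_pos hf2 he2, ?_⟩
  rw [← smul_proj hf2.ne', heq, Prod.smul_snd, smul_eq_mul, mul_one, div_eq_mul_inv, mul_smul]
  congr 1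
  rw [eq_inv_smul_iff₀ he2.ne', smul_proj he2.ne']

/-! #### Homogeneous coordinates -/

/-- Homogeneous coordinates on the space containing the affine chart. -/
def snocEquiv (n : ℕ) : (Euc n × ℝ) ≃ₗ[ℝ] (Fin (n + 1) → ℝ) where
  toFun v := Fin.snoc (fun i => v.1 i) v.2
  invFun f := (WithLp.toLp 2 fun i => f i.castSucc, f (Fin.last n))
  map_add' u v := by
    ext i
    refine Fin.lastCases ?_ (fun j => ?_) i <;> simp
  map_smul' c v := by
    ext i
    refine Fin.lastCases ?_ (fun j => ?_) i <;> simp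
  left_inv v := by ext1 <;> simp
  right_inv f := by
    ext i
    refine Fin.lastCases ?_ (fun j => ?_) i <;> simp

lemma chart_eq_iff (g : (Fin (n + 1) → ℝ) ≃ₗ[ℝ] (Fin (n + 1) → ℝ)) (x y : Euc n) :
    chart y = projMap g (chart x) ↔
      ∃ a : ℝ, a • g (snocEquiv n (x, 1)) = snocEquiv n (y, 1) := by
  unfold chart projMap
  rw [Projectivization.map_mk, Projectivization.mk_eq_mk_iff']
  rfl

theorem projective_of_focusing (H : PCone (coneOver Ω) (height n))
    (H' : PCone (coneOver Ω') (height n)) (hop : IsOpen Ω) (hbd : Bornology.IsBounded Ω)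
    (hcv : Convex ℝ Ω) (hop' : IsOpen Ω') (hcv' : Convex ℝ Ω') {τ : Euc n → Euc n}
    (hτ : IsHilbertIsometry Ω Ω' τ) {e : Euc n} (he : IsFocusingPoint Ω Ω' τ e) :
    IsProjectiveOn Ω τ := by
  rcases subsingleton_or_nontrivial (Euc n) with hs | hs
  · -- In dimension zero every map is the identity.
    refine ⟨LinearEquiv.refl ℝ _, fun x _ => ?_⟩
    rw [chart_eq_iff]
    exact ⟨1, by rw [one_smul, Subsingleton.elim (τ x) x]; rfl⟩
  obtain ⟨e', X⟩ := exists_focusData H H' hop hcv hop' hcv' hτ he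
  obtain ⟨ι, _, b, hb⟩ := exists_basis H hop hbd hcv
  obtain ⟨L, hL⟩ := X.exists_equiv b hb
  refine ⟨(snocEquiv n).symm.trans (L.trans (snocEquiv n)), fun x hx => ?_⟩
  rw [chart_eq_iff]
  obtain ⟨c, -, ec⟩ := hL _ (mem_coneOver_one.2 hx)
  rw [coneMap, proj_one] at ec
  refine ⟨c, ?_⟩
  rw [ec, map_smul]
  simp

/-- A ray of a convex domain ends at a single boundary point. -/
lemma ray_end_unique (hop : IsOpen Ω) (hcv : Convex ℝ Ω) {r : Set (Euc n)} (hr : IsRayIn Ω r)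
    {x y : Euc n} (hx : IsBdryLimit Ω r x) (hy : IsBdryLimit Ω r y) : x = y := by
  obtain ⟨p, hp, d, hd, rfl⟩ := hr
  have hcl : IsClosed {x : Euc n | ∃ t : ℝ, 0 ≤ t ∧ x = p + t • d} := by
    have h1 : IsClosed ((fun x : ℝ => x • d) '' Ici 0) :=
      (isClosedEmbedding_smul_left hd).isClosedMap _ isClosed_Ici
    have h2 := (Homeomorph.addLeft p).isClosedMap _ h1
    convert h2 using 1
    ext z
    simp only [mem_ofPred_eq, mem_image, mem_Ici, exists_exists_and_eq_and, Homeomorph.coe_addLeft]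
    exact exists_congr fun t => and_congr_right fun _ => eq_comm
  have hpar : ∀ {z}, IsBdryLimit Ω ({x | ∃ t : ℝ, 0 ≤ t ∧ x = p + t • d} ∩ Ω) z →
      ∃ t : ℝ, 0 ≤ t ∧ z = p + t • d := fun {z} hz =>
    hcl.closure_subset_iff.2 inter_subset_left hz.2
  -- A boundary point is never strictly between `p` and another boundary point.
  have key : ∀ s t : ℝ, 0 ≤ s → s < t → p + s • d ∈ frontier Ω → p + t • d ∈ frontier Ω →
      False := by
    intro s t hs hst h1 h2
    rw [hop.frontier_eq] at h1 h2
    have ht : 0 < t := hs.trans_lt hst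
    have h3 := hcv.combo_interior_closure_mem_interior (by rwa [hop.interior_eq]) h2.1
      (sub_pos.2 ((div_lt_one ht).2 hst)) (div_nonneg hs ht.le) (by ring) (x := p)
    rw [hop.interior_eq] at h3
    refine h1.2 ?_
    convert h3 using 1
    rw [smul_add, smul_smul, div_mul_cancel₀ _ ht.ne']
    module
  obtain ⟨s, hs, rfl⟩ := hpar hx
  obtain ⟨t, ht, rfl⟩ := hpar hy
  rcases lt_trichotomy s t with h | h | h
  · exact (key s t hs h hx.1 hy.1).elim
  · rw [h]
  · exact (key t s ht h hy.1 hx.1).elim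

/-- A projective map sends every ray towards `e` to a set accumulating only at the projective
image of `e`, so every extreme point is focusing. -/
theorem focusing_of_projective (hne : Ω.Nonempty) (hop : IsOpen Ω) (hbd : Bornology.IsBounded Ω)
    (hcv : Convex ℝ Ω) (hop' : IsOpen Ω') {τ : Euc n → Euc n} (hmaps : MapsTo τ Ω Ω')
    (hpr : IsProjectiveOn Ω τ) : ∃ e : Euc n, IsFocusingPoint Ω Ω' τ e := by
  obtain ⟨g, hg⟩ := hpr
  obtain ⟨e, he⟩ := hbd.isCompact_closure.extremePoints_nonempty hne.closure
  refine ⟨e, he, ?_⟩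
  let L : (Euc n × ℝ) ≃ₗ[ℝ] (Euc n × ℝ) := (snocEquiv n).trans (g.trans (snocEquiv n).symm)
  have hLcont : Continuous L := L.toLinearMap.continuous_of_finiteDimensional
  have hLne : ∀ x : Euc n, L (x, 1) ≠ 0 := fun x h0 => by
    have := (L.map_eq_zero_iff).1 h0
    exact one_ne_zero (α := ℝ) (congrArg Prod.snd this)
  have hLτ : ∀ x ∈ Ω, L (x, 1) = (L (x, 1)).2 • ((τ x, 1) : Euc n × ℝ) := by
    intro x hx
    obtain ⟨a, ha⟩ := (chart_eq_iff g x (τ x)).1 (hg x hx)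
    have h1 : a • L (x, 1) = (τ x, 1) := by
      apply (snocEquiv n).injective
      rw [← ha, map_smul]
      simp [L]
    have h2 : a * (L (x, 1)).2 = 1 := by simpa using congrArg Prod.snd h1
    rw [← h1, smul_smul, mul_comm, h2, one_smul]
  suffices hkey : ∀ r, IsRayIn Ω r → IsBdryLimit Ω r e → ∀ a, IsBdryLimit Ω' (τ '' r) a →
      a = proj (L (e, 1)) by
    intro r₁ r₂ hr₁ hr₂ h₁ h₂ a₁ a₂ ha₁ ha₂
    rw [hkey r₁ hr₁ h₁ a₁ ha₁, hkey r₂ hr₂ h₂ a₂ ha₂]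
  intro r hr hre a ha
  have hrΩ : r ⊆ Ω := by
    obtain ⟨p, -, d, -, rfl⟩ := hr
    exact inter_subset_right
  obtain ⟨y, hy, ty⟩ := mem_closure_iff_seq_limit.1 ha.2
  choose x hxr hxy using hy
  obtain ⟨z, -, φ, hφ, tz⟩ := hbd.isCompact_closure.tendsto_subseq
    fun k => subset_closure (hrΩ (hxr k))
  have tL : Tendsto (fun k => L (x (φ k), 1)) atTop (𝓝 (L (z, 1))) :=
    (hLcont.tendsto _).comp (tz.prodMk_nhds tendsto_const_nhds)
  have tL' : Tendsto (fun k => L (x (φ k), 1)) atTop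
      (𝓝 ((L (z, 1)).2 • ((a, 1) : Euc n × ℝ))) := by
    have t1 : Tendsto (fun k => (L (x (φ k), 1)).2) atTop (𝓝 (L (z, 1)).2) :=
      (continuous_snd.tendsto _).comp tL
    have t2 : Tendsto (fun k => ((τ (x (φ k)), 1) : Euc n × ℝ)) atTop (𝓝 (a, 1)) := by
      refine Tendsto.prodMk_nhds ?_ tendsto_const_nhds
      refine (ty.comp hφ.tendsto_atTop).congr fun k => ?_
      exact (hxy (φ k)).symm
    exact (t1.smul t2).congr fun k => (hLτ _ (hrΩ (hxr (φ k)))).symm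
  have hlim := tendsto_nhds_unique tL tL'
  have hne2 : (L (z, 1)).2 ≠ 0 := fun h0 => hLne z (by rw [hlim, h0, zero_smul])
  have haz : a = proj (L (z, 1)) := by rw [hlim, proj_smul hne2, proj_one]
  have hzcl : z ∈ closure r :=
    mem_closure_of_tendsto tz (Eventually.of_forall fun k => hxr (φ k))
  have hzn : z ∉ Ω := by
    intro hz
    have h1 := ha.1
    rw [hop'.frontier_eq] at h1
    refine h1.2 ?_
    rw [haz, hLτ z hz, proj_smul hne2, proj_one]
    exact hmaps hz
  have hzf : IsBdryLimit Ω r z := by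
    refine ⟨?_, hzcl⟩
    rw [hop.frontier_eq]
    exact ⟨closure_mono hrΩ hzcl, hzn⟩
  rw [haz, ray_end_unique hop hcv hr hzf hre]

end application
end HilbertCone

/-- An isometry `τ : Ω → Ω'` of Hilbert geometries is (the restriction
of) a projective transformation if and only if `τ` has a focusing point. -/
theorem stmt_1 {n : ℕ} (Ω Ω' : Set (Euc n))
    (hne : Ω.Nonempty) (hop : IsOpen Ω) (hbd : Bornology.IsBounded Ω) (hcv : Convex ℝ Ω)
    (hne' : Ω'.Nonempty) (hop' : IsOpen Ω') (hbd' : Bornology.IsBounded Ω')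
    (hcv' : Convex ℝ Ω') (τ : Euc n → Euc n) (hτ : IsHilbertIsometry Ω Ω' τ) :
    IsProjectiveOn Ω τ ↔ ∃ e : Euc n, IsFocusingPoint Ω Ω' τ e := by
  have H := HilbertCone.pcone hne hop hbd hcv
  have H' := HilbertCone.pcone hne' hop' hbd' hcv'
  constructor
  · exact HilbertCone.focusing_of_projective hne hop hbd hcv hop' hτ.1
  · rintro ⟨e, he⟩
    exact HilbertCone.projective_of_focusing H H' hop hbd hcv hop' hcv' hτ he
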